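/- arXiv:2603.07945 — 6 statements merged into one kernel-verified Lean document; each statement's English description precedes it below -/
import Mathlib

section
/- Let R be a henselian Gorenstein Noetherian local ring with dim R > 0 and let 𝒳 be a resolving subcategory of the category of finitely generated R-modules all of whose members are maximal Cohen–Macaulay. Then there exists a finitely generated R-module C with C ∈ 𝒞(𝒳) and C ∉ 𝒳. -/
open CategoryTheory IsLocalRing

universe u

noncomputable section

/-- The `i`-th Ext module of two `R`-modules. -/
abbrev ExtMod (R : Type u) [CommRing R] (i : ℕ) (M N : ModuleCat.{u} R) : ModuleCat R :=
  ((Ext R (ModuleCat.{u} R) i).obj (Opposite.op M)).obj N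

/-- Vanishing of the `i`-th Ext module: `Ext_R^i(M, N) = 0`. -/
def ExtVanish (R : Type u) [CommRing R] (i : ℕ) (M N : ModuleCat.{u} R) : Prop :=
  Subsingleton (ExtMod R i M N)

variable (R : Type u) [CommRing R]

/-- `0 → A → B → C → 0` is a short exact sequence. -/
def IsSES {A B C : ModuleCat.{u} R} (f : A →ₗ[R] B) (g : B →ₗ[R] C) : Prop :=
  Function.Injective f ∧ Function.Exact f g ∧ Function.Surjective g

/-- A resolving subcategory of the category of finitely generated `R`-modules. -/
structure IsResolving (𝒳 : Set (ModuleCat.{u} R)) : Prop where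
  finite : ∀ M ∈ 𝒳, Module.Finite R M
  isoClosed : ∀ {M N : ModuleCat.{u} R}, M ∈ 𝒳 → (↥M ≃ₗ[R] ↥N) → N ∈ 𝒳
  freeMem : ∀ M : ModuleCat.{u} R, Module.Finite R M → Module.Free R M → M ∈ 𝒳
  summandClosed : ∀ M N : ModuleCat.{u} R, ModuleCat.of R (↥M × ↥N) ∈ 𝒳 → M ∈ 𝒳
  extClosed : ∀ (A B C : ModuleCat.{u} R) (f : A →ₗ[R] B) (g : B →ₗ[R] C),
    IsSES R f g → A ∈ 𝒳 → C ∈ 𝒳 → B ∈ 𝒳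
  kerClosed : ∀ (A B C : ModuleCat.{u} R) (f : A →ₗ[R] B) (g : B →ₗ[R] C),
    IsSES R f g → B ∈ 𝒳 → C ∈ 𝒳 → A ∈ 𝒳

/-- `f : X → M` is a right `𝒳`-approximation of `M`. -/
def IsRightApprox (𝒳 : Set (ModuleCat.{u} R)) {X M : ModuleCat.{u} R} (f : X →ₗ[R] M) : Prop :=
  X ∈ 𝒳 ∧ ∀ W ∈ 𝒳, ∀ g : ↥W →ₗ[R] ↥M, ∃ h : ↥W →ₗ[R] ↥X, f ∘ₗ h = g

/-- `M` admits a right `𝒳`-approximation. -/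
def HasRightApprox (𝒳 : Set (ModuleCat.{u} R)) (M : ModuleCat.{u} R) : Prop :=
  ∃ (X : ModuleCat.{u} R) (f : X →ₗ[R] M), IsRightApprox R 𝒳 f

/-- `𝒳` is contravariantly infinite: no finitely generated module outside `𝒳` admits
a right `𝒳`-approximation. -/
def ContravariantlyInfinite (𝒳 : Set (ModuleCat.{u} R)) : Prop :=
  ∀ M : ModuleCat.{u} R, Module.Finite R M → M ∉ 𝒳 → ¬ HasRightApprox R 𝒳 M

/-- `𝒳` is contravariantly finite: every finitely generated module admits
a right `𝒳`-approximation. -/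
def ContravariantlyFinite (𝒳 : Set (ModuleCat.{u} R)) : Prop :=
  ∀ M : ModuleCat.{u} R, Module.Finite R M → HasRightApprox R 𝒳 M

/-- The restricted functor `Hom_R(-, C)|_𝒳` is finitely presented, i.e. `C ∈ 𝒞(𝒳)`. -/
def MemCC (𝒳 : Set (ModuleCat.{u} R)) (C : ModuleCat.{u} R) : Prop :=
  ∃ (X₀ X₁ : ModuleCat.{u} R) (g : ↥X₁ →ₗ[R] ↥X₀) (f : ↥X₀ →ₗ[R] ↥C), X₀ ∈ 𝒳 ∧ X₁ ∈ 𝒳 ∧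
    ∀ W ∈ 𝒳, Function.Surjective (fun h : ↥W →ₗ[R] ↥X₀ => f ∘ₗ h) ∧
      Function.Exact (fun h : ↥W →ₗ[R] ↥X₁ => g ∘ₗ h) (fun h : ↥W →ₗ[R] ↥X₀ => f ∘ₗ h)

/-- `𝒳` is coherent: `𝒞(𝒳) = rap 𝒳`. -/
def Coherent (𝒳 : Set (ModuleCat.{u} R)) : Prop :=
  ∀ M : ModuleCat.{u} R, Module.Finite R M → (MemCC R 𝒳 M ↔ HasRightApprox R 𝒳 M)

/-- The right Ext-orthogonal class `𝒳^⊥` of a class `𝒳` of finitely generated modules. -/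
def XPerp (𝒳 : Set (ModuleCat.{u} R)) : Set (ModuleCat.{u} R) :=
  {Y | Module.Finite R Y ∧ ∀ X ∈ 𝒳, ∀ i, 0 < i → ExtVanish R i X Y}

/-- The projective dimension of `M` is at most `n`. -/
def ProjDimLE (M : ModuleCat.{u} R) (n : ℕ) : Prop :=
  ∀ N : ModuleCat.{u} R, ∀ i, n < i → ExtVanish R i M N

/-- The depth of an `R`-module over a local ring: `inf { i | Ext^i(k, M) ≠ 0 }`. -/
def moduleDepth [IsLocalRing R] (M : ModuleCat.{u} R) : ℕ∞ :=
  sInf ((fun i : ℕ => (i : ℕ∞)) ''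
    {i : ℕ | ¬ ExtVanish R i (ModuleCat.of R (ResidueField R)) M})

/-- `M` is a maximal Cohen–Macaulay `R`-module: `depth M ≥ dim R`. -/
def IsMCM [IsLocalRing R] (M : ModuleCat.{u} R) : Prop :=
  ringKrullDim R ≤ (moduleDepth R M : WithBot ℕ∞)

/-- A Gorenstein local ring: `∃ n, Ext^i(M, R) = 0` for every finitely generated `M`
and every `i > n`. -/
def IsGorensteinLocalRing : Prop :=
  ∃ n : ℕ, ∀ M : ModuleCat.{u} R, Module.Finite R M →
    ∀ i, n < i → ExtVanish R i M (ModuleCat.of R R)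

/-- A regular local ring: Noetherian local with `dim R = dim_k 𝔪/𝔪²`. -/
def IsRegularLocal [IsLocalRing R] : Prop :=
  IsNoetherianRing R ∧
    ringKrullDim R = (Module.finrank (ResidueField R) (CotangentSpace R) : ℕ)

/-- Witness that the local ring `R` is a complete intersection: its `𝔪`-adic completion
is `Q/(f₁, …, f_c)` for a regular local ring `Q` and a `Q`-regular sequence `f₁, …, f_c`. -/
structure CompleteIntersectionWitness [IsLocalRing R] : Type (u + 1) where
  Q : Type u
  [commRing : CommRing Q]
  [localRing : IsLocalRing Q]
  regular : IsRegularLocal Q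
  fs : List Q
  regSeq : RingTheory.Sequence.IsRegular Q fs
  equiv : AdicCompletion (maximalIdeal R) R ≃+* Q ⧸ Ideal.span {x : Q | x ∈ fs}

/-- The local ring `R` is a complete intersection. -/
def IsCompleteIntersection [IsLocalRing R] : Prop :=
  Nonempty (CompleteIntersectionWitness R)

end

section Helpers
open Abelian Pointwise

lemma ExtVanish.toNew {R : Type u} [CommRing R] {i : ℕ} {M N : ModuleCat.{u} R}
    (h : ExtVanish R i M N) : Subsingleton (Abelian.Ext M N i) := by
  let P := projectiveResolution M
  have hz : Limits.IsZero ((P.complex.linearYonedaObj R N).homology i) :=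
    (ModuleCat.isZero_iff_subsingleton.mpr h).of_iso (P.isoExt i N).symm
  rw [← HomologicalComplex.exactAt_iff_isZero_homology] at hz
  refine subsingleton_of_forall_eq 0 fun α => ?_
  obtain ⟨f, hf, rfl⟩ := P.extMk_surjective α (i+1) rfl
  cases i with
  | zero =>
    rw [HomologicalComplex.exactAt_iff' _ 0 0 1 (by simp) (by simp),
      ShortComplex.moduleCat_exact_iff] at hz
    obtain ⟨g, hg⟩ := hz f hf
    have : f = 0 := by
      rw [← hg]
      have e : (HomologicalComplex.sc' (P.complex.linearYonedaObj R N) 0 0 1).f = 0 :=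
        (P.complex.linearYonedaObj R N).shape 0 0 (by simp)
      rw [e]
      rfl
    subst this
    simp
  | succ i =>
    rw [HomologicalComplex.exactAt_iff' _ i (i+1) (i+2) (by simp) (by simp),
      ShortComplex.moduleCat_exact_iff] at hz
    obtain ⟨g, hg⟩ := hz f hf
    exact (P.extMk_eq_zero_iff f (i+2) rfl hf i rfl).mpr ⟨g, hg⟩

variable {R : Type u} [CommRing R] [IsNoetherianRing R] [IsLocalRing R]

/-- Nakayama step -/
lemma ext_vanish_of_quot (M N : ModuleCat.{u} R) [Module.Finite R M] [Module.Finite R N] (x : R)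
    (hx : x ∈ maximalIdeal R) (reg : IsSMulRegular M x) (i : ℕ)
    (h : Subsingleton (Abelian.Ext (ModuleCat.of R (QuotSMulTop x M)) N (i + 1))) :
    Subsingleton (Abelian.Ext M N i) := by
  have hS := reg.smulShortComplex_shortExact
  by_contra! ntr
  have : x ∈ (Module.annihilator R (Abelian.Ext M N i)).jacobson :=
    (IsLocalRing.maximalIdeal_le_jacobson _) hx
  absurd Submodule.top_ne_pointwise_smul_of_mem_jacobson_annihilator this
  rw [eq_comm, eq_top_iff]
  intro y hy
  obtain ⟨z, hz⟩ : ∃ z : Abelian.Ext M N i, (Ext.mk₀ (x • 𝟙 M)).comp z (zero_add i) = y :=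
    Ext.contravariant_sequence_exact₁ hS _ y (add_comm 1 i) (h.elim _ _)
  rw [Ext.mk₀_smul, Ext.smul_comp, Ext.mk₀_id_comp] at hz
  rw [← hz]
  exact Submodule.smul_mem_pointwise_smul _ _ ⊤ trivial

lemma exists_reg (M : ModuleCat.{u} R) [Module.Finite R M]
    (h : Subsingleton (ResidueField R →ₗ[R] M)) :
    ∃ x ∈ maximalIdeal R, IsSMulRegular M x := by
  obtain ⟨x, mem_ann, hx⟩ := IsSMulRegular.subsingleton_linearMap_iff.mp h
  refine ⟨x, ?_, hx⟩
  have : Module.annihilator R (ResidueField R) = maximalIdeal R := Ideal.annihilator_quotient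
  rwa [← this]

lemma hom_of_ext0 {M N : ModuleCat.{u} R} (h : Subsingleton (Abelian.Ext M N 0)) :
    Subsingleton (M →ₗ[R] N) := by
  have : Subsingleton (M ⟶ N) := Ext.addEquiv₀.subsingleton_congr.mp h
  exact ModuleCat.homAddEquiv.symm.subsingleton

noncomputable abbrev kk (R : Type u) [CommRing R] [IsLocalRing R] : ModuleCat.{u} R :=
  ModuleCat.of R (ResidueField R)

/-- Ischebeck -/
lemma ischebeck (N : ModuleCat.{u} R) [Module.Finite R N] (n : ℕ)
    (hn : ∀ M : ModuleCat.{u} R, Module.Finite R M → ∀ i, n < i → Subsingleton (Abelian.Ext M N i))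
    (s : ℕ) : ∀ M : ModuleCat.{u} R, Module.Finite R M →
      (∀ i < s, Subsingleton (Abelian.Ext (kk R) M i)) →
      ∀ i, n < i + s → Subsingleton (Abelian.Ext M N i) := by
  induction s with
  | zero => intro M hM _ i hi; exact hn M hM i (by omega)
  | succ s ih =>
    intro M hM h i hi
    obtain ⟨x, hx, reg⟩ := exists_reg M (hom_of_ext0 (M := kk R) (h 0 (by omega)))
    apply ext_vanish_of_quot M N x hx reg
    apply ih _ inferInstance
    · intro j hj
      refine subsingleton_of_forall_eq 0 fun α => ?_
      obtain ⟨y, hy⟩ := Ext.covariant_sequence_exact₃ (kk R) reg.smulShortComplex_shortExact α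
        rfl ((h (j+1) (by omega)).elim _ _)
      have hy0 : y = 0 := (h j (by omega)).elim y 0
      rw [← hy, hy0, Ext.zero_comp]
      rfl
    · omega

lemma ext_embed (N M K : ModuleCat.{u} R) (n : ℕ) (f : K →ₗ[R] M) (hf : Function.Injective f)
    (h1 : Subsingleton (Abelian.Ext M N n))
    (h2 : Subsingleton (Abelian.Ext (ModuleCat.of R (M ⧸ LinearMap.range f)) N (n + 1))) :
    Subsingleton (Abelian.Ext K N n) := by
  have hex : Function.Exact f (LinearMap.range f).mkQ := LinearMap.exact_map_mkQ_range f
  let S : ShortComplex (ModuleCat.{u} R) :=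
    ModuleCat.shortComplexOfCompEqZero f (LinearMap.range f).mkQ hex.linearMap_comp_eq_zero
  have hS : S.ShortExact :=
    { exact := ModuleCat.shortComplex_exact _ hex
      mono_f := (ModuleCat.mono_iff_injective _).mpr hf
      epi_g := (ModuleCat.epi_iff_surjective _).mpr (Submodule.mkQ_surjective _) }
  refine subsingleton_of_forall_eq 0 fun α => ?_
  obtain ⟨y, hy⟩ := Ext.contravariant_sequence_exact₁ hS N α (add_comm 1 n) (h2.elim _ _)
  have hy0 : y = 0 := h1.elim y 0
  rw [← hy, hy0, Ext.comp_zero]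

lemma ext_middle (N A B C : ModuleCat.{u} R) (n : ℕ) (f : A →ₗ[R] B) (g : B →ₗ[R] C)
    (hf : Function.Injective f) (hg : Function.Surjective g) (hex : Function.Exact f g)
    (h1 : Subsingleton (Abelian.Ext A N n)) (h2 : Subsingleton (Abelian.Ext C N n)) :
    Subsingleton (Abelian.Ext B N n) := by
  let S : ShortComplex (ModuleCat.{u} R) :=
    ModuleCat.shortComplexOfCompEqZero f g hex.linearMap_comp_eq_zero
  have hS : S.ShortExact :=
    { exact := ModuleCat.shortComplex_exact _ hex
      mono_f := (ModuleCat.mono_iff_injective _).mpr hf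
      epi_g := (ModuleCat.epi_iff_surjective _).mpr hg }
  refine subsingleton_of_forall_eq 0 fun α => ?_
  obtain ⟨y, hy⟩ := Ext.contravariant_sequence_exact₂ hS N α (h1.elim _ _)
  have hy0 : y = 0 := h2.elim y 0
  rw [← hy, hy0, Ext.comp_zero]

lemma ext_iso (N A B : ModuleCat.{u} R) (n : ℕ) (e : A ≃ₗ[R] B)
    (h : Subsingleton (Abelian.Ext B N n)) : Subsingleton (Abelian.Ext A N n) := by
  have : Subsingleton (Abelian.Ext (ModuleCat.of R PUnit.{u+1}) N n) := by
    have : HasProjectiveDimensionLT (ModuleCat.of R PUnit.{u+1}) 0 :=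
      Limits.IsZero.hasProjectiveDimensionLT_zero
        (ModuleCat.isZero_iff_subsingleton.mpr (inferInstanceAs (Subsingleton PUnit)))
    exact HasProjectiveDimensionLT.subsingleton _ 0 _ (Nat.zero_le _) _
  refine ext_middle N (ModuleCat.of R PUnit.{u+1}) A B n 0 e.toLinearMap ?_ e.surjective ?_ this h
  · intro x y _; exact Subsingleton.elim (α := PUnit) x y
  · intro y
    have : (0 : B) = e y ↔ y = 0 := by rw [eq_comm]; exact e.map_eq_zero_iff
    simpa [eq_comm] using this

lemma residue_case (N : ModuleCat.{u} R) (n : ℕ)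
    (hn : ∀ M : ModuleCat.{u} R, Module.Finite R M → Subsingleton (Abelian.Ext M N (n + 1)))
    (M : ModuleCat.{u} R) [Module.Finite R M] (hs : ¬ Subsingleton (ResidueField R →ₗ[R] M))
    (hE : Subsingleton (Abelian.Ext M N n)) : Subsingleton (Abelian.Ext (kk R) N n) := by
  rw [not_subsingleton_iff_nontrivial] at hs
  obtain ⟨f, hf⟩ := exists_ne (0 : ResidueField R →ₗ[R] M)
  have : IsSimpleModule R (ResidueField R) :=
    isSimpleModule_iff_isCoatom.mpr (maximalIdeal.isMaximal R).out
  exact ext_embed N M (kk R) n f (LinearMap.injective_of_ne_zero hf) hE (hn _ inferInstance)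

/-- residue field step -/
lemma ext_residue (N : ModuleCat.{u} R) (n : ℕ)
    (hn : ∀ M : ModuleCat.{u} R, Module.Finite R M → Subsingleton (Abelian.Ext M N (n + 1)))
    (e : ℕ) : ∀ (j : ℕ) (M : ModuleCat.{u} R), Module.Finite R M → Nontrivial M →
      Module.supportDim R M ≤ e → j + e < n →
      (∀ i, j < i → Subsingleton (Abelian.Ext M N i)) →
      Subsingleton (Abelian.Ext (kk R) N n) := by
  induction e with
  | zero =>
    intro j M _ _ hd hj hE
    by_cases hs : Subsingleton (ResidueField R →ₗ[R] M)
    · exfalso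
      obtain ⟨x, hx, reg⟩ := exists_reg M hs
      have : Nontrivial (QuotSMulTop x M) := nontrivial_quotSMulTop_of_mem_maximalIdeal M hx
      have h1 := Module.supportDim_quotSMulTop_succ_eq_supportDim reg hx
      have h2 := Module.supportDim_ne_bot_of_nontrivial R (QuotSMulTop x M)
      rw [← h1] at hd
      generalize Module.supportDim R (QuotSMulTop x M) = a at hd h2
      exact h2 (by simpa using hd)
    · exact residue_case N n hn M hs (hE n (by omega))
  | succ e ih =>
    intro j M _ _ hd hj hE
    by_cases hs : Subsingleton (ResidueField R →ₗ[R] M)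
    · obtain ⟨x, hx, reg⟩ := exists_reg M hs
      have nt : Nontrivial (QuotSMulTop x M) := nontrivial_quotSMulTop_of_mem_maximalIdeal M hx
      have h1 := Module.supportDim_quotSMulTop_succ_eq_supportDim reg hx
      refine ih (j + 1) (ModuleCat.of R (QuotSMulTop x M)) inferInstance nt ?_ (by omega) ?_
      · rw [← h1, Nat.cast_succ] at hd
        exact (ENat.WithBot.add_le_add_one_right_iff).mp hd
      · rintro (_ | i) hi
        · omega
        refine subsingleton_of_forall_eq 0 fun α => ?_
        obtain ⟨y, hy⟩ := Ext.contravariant_sequence_exact₃ reg.smulShortComplex_shortExact N α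
          ((hE (i + 1) (by omega)).elim _ _) (add_comm 1 i)
        have hy0 : y = 0 := (hE i (by omega)).elim y 0
        rw [← hy, hy0, Ext.comp_zero]
        rfl
    · exact residue_case N n hn M hs (hE n (by omega))

lemma bass_step (N : ModuleCat.{u} R) [Module.Finite R N] (d n : ℕ) (hd : ringKrullDim R = d)
    (hdn : d < n)
    (hn : ∀ M : ModuleCat.{u} R, Module.Finite R M → Subsingleton (Abelian.Ext M N (n + 1)))
    (M : ModuleCat.{u} R) (hM : Module.Finite R M) : Subsingleton (Abelian.Ext M N n) := by
  have hk : Subsingleton (Abelian.Ext (kk R) N n) := by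
    refine ext_residue N n hn d 0 (ModuleCat.of R R) inferInstance (inferInstanceAs (Nontrivial R))
      ?_ (by omega) ?_
    · rw [← hd]
      exact (Module.supportDim_self_eq_ringKrullDim R).le
    · rintro (_ | i) hi
      · omega
      · have : Projective (ModuleCat.of R R) :=
          (IsProjective.iff_projective (R := R) R).mp inferInstance
        exact subsingleton_of_forall_eq 0 fun α => Ext.eq_zero_of_projective α
  refine IsNoetherianRing.induction_on_isQuotientEquivQuotientPrime R hM
    (motive := fun P _ _ _ => Subsingleton (Abelian.Ext (ModuleCat.of R P) N n)) ?_ ?_ ?_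
  · intro P _ _ _ hP
    have : HasProjectiveDimensionLT (ModuleCat.of R P) 0 :=
      Limits.IsZero.hasProjectiveDimensionLT_zero
        (ModuleCat.isZero_iff_subsingleton.mpr hP)
    exact HasProjectiveDimensionLT.subsingleton _ 0 _ (Nat.zero_le _) _
  · intro P _ _ _ p e
    by_cases hp : p.1 = maximalIdeal R
    · refine ext_iso N (ModuleCat.of R P) (kk R) n ?_ hk
      exact e.trans (Submodule.quotEquivOfEq _ _ hp)
    · obtain ⟨x, hx, hxp⟩ := SetLike.exists_of_lt
        (lt_of_le_of_ne (IsLocalRing.le_maximalIdeal p.2.ne_top) hp)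
      refine ext_vanish_of_quot (ModuleCat.of R P) N x hx ?_ n (hn _ inferInstance)
      have : IsSMulRegular (R ⧸ p.1) x := by
        have := p.2
        rw [isSMulRegular_iff_right_eq_zero_of_smul]
        intro y hy
        rw [Algebra.smul_def] at hy
        refine (mul_eq_zero.mp hy).resolve_left ?_
        rwa [Ideal.Quotient.algebraMap_eq, Ideal.Quotient.eq_zero_iff_mem]
      exact (e.isSMulRegular_congr x).mpr this
  · intro A _ _ _ B _ _ _ C _ _ _ f g hf hg hex h1 h3
    exact ext_middle N (ModuleCat.of R A) (ModuleCat.of R B) (ModuleCat.of R C) n f g hf hg hex h1 h3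

lemma bass (N : ModuleCat.{u} R) [Module.Finite R N] (d : ℕ) (hd : ringKrullDim R = d) (n : ℕ)
    (hn : ∀ M : ModuleCat.{u} R, Module.Finite R M → ∀ i, d + n < i →
      Subsingleton (Abelian.Ext M N i)) :
    ∀ M : ModuleCat.{u} R, Module.Finite R M → ∀ i, d < i → Subsingleton (Abelian.Ext M N i) := by
  induction n with
  | zero => simpa using hn
  | succ n ih =>
    apply ih
    intro M hM i hi
    rcases Nat.lt_or_ge (d + (n + 1)) i with h | h
    · exact hn M hM i h
    · exact bass_step N d i hd (by omega) (fun M hM => hn M hM _ (by omega)) M hM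

lemma mcm_ext {M : ModuleCat.{u} R} (h : IsMCM R M) (d : ℕ) (hd : ringKrullDim R = d)
    (i : ℕ) (hi : i < d) : ExtVanish R i (kk R) M := by
  by_contra hc
  have h1 : moduleDepth R M ≤ (i : ℕ∞) := sInf_le ⟨i, hc, rfl⟩
  have h2 : ((d : ℕ∞) : WithBot ℕ∞) ≤ ((i : ℕ∞) : WithBot ℕ∞) := by
    refine le_trans ?_ (le_trans h (WithBot.coe_le_coe.mpr h1))
    rw [hd]; rfl
  have h3 := WithBot.coe_le_coe.mp h2
  have : d ≤ i := by exact_mod_cast h3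
  omega

/-- lifting along the quotient map -/
lemma exists_lift (W : ModuleCat.{u} R) (x : R) (reg : IsSMulRegular R x)
    (h : Subsingleton (Abelian.Ext W (ModuleCat.of R R) 1))
    (g : W →ₗ[R] QuotSMulTop x R) :
    ∃ l : W →ₗ[R] R, (x • (⊤ : Submodule R R)).mkQ ∘ₗ l = g := by
  have hS := IsSMulRegular.smulShortComplex_shortExact (M := ModuleCat.of R R) reg
  let g' : W ⟶ ((ModuleCat.of R R).smulShortComplex x).X₃ := ModuleCat.ofHom g
  obtain ⟨y, hy⟩ := Ext.covariant_sequence_exact₃ W hS (Ext.mk₀ g') (zero_add 1) (h.elim _ _)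
  obtain ⟨l, rfl⟩ := Ext.addEquiv₀.symm.surjective y
  refine ⟨ModuleCat.Hom.hom l, ?_⟩
  have : Ext.mk₀ (l ≫ ((ModuleCat.of R R).smulShortComplex x).g) = Ext.mk₀ g' := by
    rw [← hy, ← Ext.mk₀_comp_mk₀]; rfl
  have := (Ext.mk₀_bijective _ _).1 this
  exact congrArg ModuleCat.Hom.hom this

end Helpers

/-- Over a henselian Gorenstein local ring of positive dimension, if all
members of a resolving subcategory `𝒳` are maximal Cohen–Macaulay, then `𝒞(𝒳)` contains
a finitely generated module outside `𝒳`. -/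
theorem stmt5 (R : Type u) [CommRing R] [IsNoetherianRing R] [IsLocalRing R]
    [HenselianLocalRing R] (hG : IsGorensteinLocalRing R) (hdim : 0 < ringKrullDim R)
    (𝒳 : Set (ModuleCat.{u} R)) (h𝒳 : IsResolving R 𝒳) (hMCM : ∀ M ∈ 𝒳, IsMCM R M) :
    ∃ C : ModuleCat.{u} R, Module.Finite R C ∧ MemCC R 𝒳 C ∧ C ∉ 𝒳 := by
  obtain ⟨d, hd⟩ : ∃ d : ℕ, ringKrullDim R = d := by
    obtain ⟨d, hd⟩ := WithBot.ne_bot_iff_exists.mp (ringKrullDim_ne_bot (R := R))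
    have : d ≠ ⊤ := by
      rintro rfl
      exact ringKrullDim_ne_top (R := R) hd.symm
    obtain ⟨e, rfl⟩ := ENat.ne_top_iff_exists.mp this
    exact ⟨e, hd.symm⟩
  have hd0 : 0 < d := by
    rw [hd] at hdim
    exact_mod_cast hdim
  obtain ⟨n, hn⟩ := hG
  have hb := bass (ModuleCat.of R R) d hd n
    fun M hM i hi => (hn M hM i (by omega)).toNew
  have hE : ∀ W ∈ 𝒳, Subsingleton (Abelian.Ext W (ModuleCat.of R R) 1) := fun W hW =>
    ischebeck (ModuleCat.of R R) d hb d W (h𝒳.finite W hW)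
      (fun i hi => (mcm_ext (hMCM W hW) d hd i hi).toNew) 1 (by omega)
  have hR : ModuleCat.of R R ∈ 𝒳 := h𝒳.freeMem _ (inferInstanceAs (Module.Finite R R))
    (inferInstanceAs (Module.Free R R))
  obtain ⟨x, hx, reg⟩ := exists_reg (ModuleCat.of R R)
    (hom_of_ext0 (M := kk R) (mcm_ext (hMCM _ hR) d hd 0 hd0).toNew)
  have reg : IsSMulRegular R x := reg
  let π : R →ₗ[R] QuotSMulTop x R := Submodule.mkQ _
  let μ : R →ₗ[R] R := LinearMap.lsmul R R x
  have hex : Function.Exact μ π := LinearMap.exact_lsmul_mkQ_smul_top R x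
  refine ⟨ModuleCat.of R (QuotSMulTop x R), inferInstance,
    ⟨ModuleCat.of R R, ModuleCat.of R R, μ, π, hR, hR, fun W hW => ⟨?_, ?_⟩⟩, ?_⟩
  · intro g
    exact exists_lift W x reg (hE W hW) g
  · intro l
    constructor
    · intro h
      have h' : ∀ w, ∃ r, μ r = l w := fun w => (hex (l w)).mp (LinearMap.congr_fun h w)
      choose φ hφ using h'
      have inj : Function.Injective μ := reg
      refine ⟨{ toFun := φ, map_add' := fun a b => inj ?_, map_smul' := fun r a => inj ?_ }, ?_⟩
      · rw [map_add, hφ, hφ, hφ, map_add]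
      · rw [RingHom.id_apply, map_smul, hφ, hφ, map_smul]
      · exact LinearMap.ext hφ
    · rintro ⟨m, rfl⟩
      exact LinearMap.ext fun w => (hex _).mpr ⟨m w, rfl⟩
  · intro hC
    obtain ⟨l, hl⟩ := exists_lift (ModuleCat.of R (QuotSMulTop x R)) x reg (hE _ hC) LinearMap.id
    have nt : Nontrivial (QuotSMulTop x R) := nontrivial_quotSMulTop_of_mem_maximalIdeal R hx
    obtain ⟨q, hq⟩ := exists_ne (0 : QuotSMulTop x R)
    apply hq
    have hxq : x • q = 0 :=
      Module.mem_annihilator.mp (QuotSMulTop.mem_annihilator R x) q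
    have hlq : l q = 0 := by
      apply reg
      change x • l q = x • 0
      rw [← map_smul, smul_zero]
      exact (congrArg l hxq).trans (map_zero l)
    have := LinearMap.congr_fun hl q
    change π (l q) = q at this
    rw [← this, hlq, map_zero]
end

section
/- Let R be a henselian Gorenstein Noetherian local ring, 𝒳 a resolving subcategory of the category of finitely generated R-modules, and C a finitely generated R-module with C ∈ 𝒞(𝒳). Then there exists a short exact sequence 0 → K → X → C → 0 of finitely generated R-modules such that X ∈ 𝒳 and K admits a right 𝒳-approximation. -/
open CategoryTheory IsLocalRing

universe u

/-- Over a henselian Gorenstein local ring, every `C ∈ 𝒞(𝒳)` fits into a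
short exact sequence `0 → K → X → C → 0` with `X ∈ 𝒳` and `K` admitting a right
`𝒳`-approximation. -/
theorem stmt6 (R : Type u) [CommRing R] [IsNoetherianRing R] [IsLocalRing R]
    [HenselianLocalRing R] (hG : IsGorensteinLocalRing R)
    (𝒳 : Set (ModuleCat.{u} R)) (h𝒳 : IsResolving R 𝒳)
    (C : ModuleCat.{u} R) (hCfg : Module.Finite R C) (hC : MemCC R 𝒳 C) :
    ∃ (K X : ModuleCat.{u} R) (f : ↥K →ₗ[R] ↥X) (g : ↥X →ₗ[R] ↥C),
      IsSES R f g ∧ X ∈ 𝒳 ∧ HasRightApprox R 𝒳 K := by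
  obtain ⟨X₀, X₁, g, f, h₀, h₁, H⟩ := hC
  have hgf : f ∘ₗ g = 0 := by
    have := ((H X₁ h₁).2 g).2 ⟨LinearMap.id, by simp⟩
    exact this
  have hR : ModuleCat.of R R ∈ 𝒳 :=
    h𝒳.freeMem _ (inferInstanceAs (Module.Finite R R)) (inferInstanceAs (Module.Free R R))
  refine ⟨ModuleCat.of R (LinearMap.ker f), X₀, (LinearMap.ker f).subtype, f,
    ⟨Subtype.val_injective, ?_, ?_⟩, h₀, X₁,
    g.codRestrict (LinearMap.ker f) (fun x => LinearMap.congr_fun hgf x), h₁, ?_⟩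
  · exact LinearMap.exact_subtype_ker_map f
  · intro c
    obtain ⟨h, hh⟩ := (H _ hR).1 (LinearMap.toSpanSingleton R C c)
    refine ⟨h (1 : R), ?_⟩
    have := LinearMap.congr_fun hh (1 : R)
    exact this.trans (by simp)
  · intro W hW k
    obtain ⟨h, hh⟩ := ((H W hW).2 ((LinearMap.ker f).subtype ∘ₗ k)).1
      (LinearMap.ext fun w => (k w).2)
    refine ⟨h, LinearMap.ext fun w => Subtype.ext ?_⟩
    exact LinearMap.congr_fun hh w
end

section
/- Let R be a henselian Gorenstein Noetherian local ring and 𝒳 a resolving subcategory of the category of finitely generated R-modules. If 0 → N → M → C → 0 is a short exact sequence of finitely generated R-modules such that M admits a right 𝒳-approximation and C ∈ 𝒞(𝒳), then N admits a right 𝒳-approximation. -/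
open CategoryTheory IsLocalRing

universe u

/-- Over a henselian Gorenstein local ring, given a short exact sequence
`0 → N → M → C → 0` with `M ∈ rap 𝒳` and `C ∈ 𝒞(𝒳)`, one has `N ∈ rap 𝒳`. -/
theorem stmt7 (R : Type u) [CommRing R] [IsNoetherianRing R] [IsLocalRing R]
    [HenselianLocalRing R] (hG : IsGorensteinLocalRing R)
    (𝒳 : Set (ModuleCat.{u} R)) (h𝒳 : IsResolving R 𝒳)
    (N M C : ModuleCat.{u} R) (hNfg : Module.Finite R N) (hMfg : Module.Finite R M)
    (hCfg : Module.Finite R C) (f : ↥N →ₗ[R] ↥M) (g : ↥M →ₗ[R] ↥C)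
    (hses : IsSES R f g) (hM : HasRightApprox R 𝒳 M) (hC : MemCC R 𝒳 C) :
    HasRightApprox R 𝒳 N := by
  obtain ⟨hfi, hfg, hgs⟩ := hses
  obtain ⟨X, p, hX, hp⟩ := hM
  obtain ⟨X₀, X₁, g₁, f₀, hX₀, hX₁, hW⟩ := hC
  have hR : ModuleCat.of R R ∈ 𝒳 :=
    h𝒳.freeMem _ (inferInstanceAs (Module.Finite R R)) (inferInstanceAs (Module.Free R R))
  have hps : Function.Surjective p := by
    intro m
    obtain ⟨l, hl⟩ := hp _ hR (LinearMap.toSpanSingleton R M m)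
    refine ⟨l (1 : R), ?_⟩
    have := LinearMap.congr_fun hl (1 : R)
    simpa using this
  obtain ⟨h, hh⟩ := (hW X hX).1 (g ∘ₗ p)
  have hh' : ∀ b, f₀ (h b) = g (p b) := fun b => LinearMap.congr_fun hh b
  have hgf : ∀ n, g (f n) = 0 := fun n => hfg.apply_apply_eq_zero n
  let φ : (↥X₁ × ↥X) →ₗ[R] ↥X₀ := g₁.coprod h
  have hg₁ : ∀ x, f₀ x = 0 → ∃ a, g₁ a = x := by
    intro x hx
    obtain ⟨l, hl⟩ := ((hW _ hR).2 (LinearMap.toSpanSingleton R X₀ x)).1 (by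
      ext
      simp [hx])
    refine ⟨l (1 : R), ?_⟩
    have := LinearMap.congr_fun hl (1 : R)
    simpa using this
  have hfg₁ : ∀ a, f₀ (g₁ a) = 0 := by
    intro a
    have := ((hW _ hX₁).2 g₁).2 ⟨LinearMap.id, by simp⟩
    exact LinearMap.congr_fun this a
  have hφs : Function.Surjective φ := by
    intro x
    obtain ⟨m, hm⟩ := hgs (f₀ x)
    obtain ⟨b, rfl⟩ := hps m
    obtain ⟨a, ha⟩ := hg₁ (x - h b) (by rw [map_sub, hh', hm, sub_self])
    exact ⟨(a, b), by simp [φ, ha]⟩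
  have hprod : ModuleCat.of R (↥X₁ × ↥X) ∈ 𝒳 :=
    h𝒳.extClosed X₁ (ModuleCat.of R (↥X₁ × ↥X)) X (LinearMap.inl R X₁ X) (LinearMap.snd R X₁ X)
      ⟨LinearMap.inl_injective, Function.Exact.inl_snd, LinearMap.snd_surjective⟩ hX₁ hX
  have hQ : ModuleCat.of R (LinearMap.ker φ) ∈ 𝒳 :=
    h𝒳.kerClosed (ModuleCat.of R (LinearMap.ker φ)) (ModuleCat.of R (↥X₁ × ↥X)) X₀
      (LinearMap.ker φ).subtype φ
      ⟨Subtype.val_injective, LinearMap.exact_subtype_ker_map φ, hφs⟩ hprod hX₀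
  let t : LinearMap.ker φ →ₗ[R] ↥M := p ∘ₗ LinearMap.snd R X₁ X ∘ₗ (LinearMap.ker φ).subtype
  have ht : ∀ q, t q ∈ LinearMap.range f := by
    rintro ⟨⟨a, b⟩, hq⟩
    refine (hfg _).1 ?_
    have h1 : g₁ a + h b = 0 := hq
    have h2 := congrArg f₀ h1
    rw [map_add, hfg₁, zero_add, hh', map_zero] at h2
    exact h2
  let e := LinearEquiv.ofInjective f hfi
  let q : LinearMap.ker φ →ₗ[R] ↥N := e.symm.toLinearMap ∘ₗ t.codRestrict (LinearMap.range f) ht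
  have hq : ∀ x, f (q x) = t x := fun x =>
    congrArg Subtype.val (e.apply_symm_apply (t.codRestrict (LinearMap.range f) ht x))
  refine ⟨ModuleCat.of R (LinearMap.ker φ), q, hQ, ?_⟩
  intro W hWX k
  obtain ⟨b, hb⟩ := hp W hWX (f ∘ₗ k)
  have hb' : ∀ w, p (b w) = f (k w) := fun w => LinearMap.congr_fun hb w
  obtain ⟨a, ha⟩ := ((hW W hWX).2 (h ∘ₗ b)).1 (by
    ext w
    simp [hh', hb', hgf])
  have ha' : ∀ w, g₁ (a w) = h (b w) := fun w => LinearMap.congr_fun ha w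
  refine ⟨((-a).prod b).codRestrict (LinearMap.ker φ) (fun w => by simp [φ, ha']), ?_⟩
  refine LinearMap.ext fun w => hfi ?_
  exact (hq _).trans (hb' w)
end

section
/- Let R be a henselian Gorenstein Noetherian local ring and 𝒳 a resolving subcategory of the category of finitely generated R-modules. A finitely generated R-module C belongs to 𝒞(𝒳) if and only if there exists a short exact sequence 0 → Y → X → C → 0 of finitely generated R-modules such that X ∈ 𝒳, Y admits a right 𝒳-approximation, and Y ∈ 𝒳^⊥. -/
open CategoryTheory IsLocalRing

universe u

section HenselPart
open Polynomial

lemma s8_hensel_section (R : Type u) [CommRing R] [HenselianLocalRing R]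
    (B : Type u) [CommRing B] [Algebra R B] [Algebra.Etale R B]
    (φ : B →ₐ[R] ResidueField R) :
    ∃ σ : B →ₐ[R] R, ∀ b, residue R (σ b) = φ b := by
  let Q : Ideal B := RingHom.ker φ.toRingHom
  have hQ : Q.IsPrime := RingHom.ker_isPrime _
  have : Algebra.IsEtaleAt R Q :=
    have : Algebra.FormallyEtale B (Localization.AtPrime Q) :=
      Algebra.FormallyEtale.of_isLocalization Q.primeCompl
    Algebra.FormallyEtale.comp R B _
  obtain ⟨f, hf, hst⟩ := Algebra.IsEtaleAt.exists_isStandardEtale (R := R) Q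
  obtain ⟨P⟩ := hst.nonempty_standardEtalePresentation
  have hu : IsUnit (φ f) := by
    rw [isUnit_iff_ne_zero]
    intro h
    exact hf (by simpa [Q, RingHom.mem_ker] using h)
  let φ' : Localization.Away f →ₐ[R] ResidueField R :=
    IsLocalization.Away.liftAlgHom (f := φ) f hu
  have hφ' : ∀ b, φ' (algebraMap B _ b) = φ b := fun b => by
    simp [φ', IsLocalization.Away.liftAlgHom_apply]
  have hm := P.hasMap.map φ'
  have h2 := (HenselianLocalRing.TFAE R).out 0 1
  obtain ⟨a, ha, hares⟩ := h2.mp inferInstance P.f P.monic_f (φ' P.x) hm.1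
    hm.isUnit_derivative_f.ne_zero
  have hma : P.HasMap a := by
    refine ⟨by simpa [IsRoot, aeval_def, eval₂_eq_eval_map] using ha, ?_⟩
    have h3 := hm.2
    rw [← hares] at h3
    have h4 : aeval (residue R a) P.g = residue R (aeval a P.g) := by
      have := Polynomial.aeval_algebraMap_apply (ResidueField R) a P.g
      simpa using this
    rw [h4] at h3
    exact (isUnit_map_iff (residue R) _).mp h3
  let e := P.equivRing
  let σ' : Localization.Away f →ₐ[R] R := (P.lift a hma).comp e.toAlgHom
  have key : (Algebra.ofId R (ResidueField R)).comp (P.lift a hma) =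
      φ'.comp (P.lift P.x P.hasMap) := by
    apply StandardEtalePair.hom_ext
    simpa using hares
  refine ⟨σ'.comp (IsScalarTower.toAlgHom R B _), fun b => ?_⟩
  have := DFunLike.congr_fun key (e (algebraMap B _ b))
  have h5 : P.lift P.x P.hasMap (e (algebraMap B _ b)) = algebraMap B _ b := by
    exact e.symm_apply_apply _
  simp only [AlgHom.comp_apply, h5, hφ'] at this
  rw [← this]
  rfl

lemma s8_hensel_factor (R : Type u) [CommRing R] [HenselianLocalRing R]
    (p : R[X]) (hp : p.Monic) (f g : (ResidueField R)[X]) (hf : f.Monic) (hg : g.Monic)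
    (h : p.map (residue R) = f * g) (hc : IsCoprime f g) :
    ∃ F G : R[X], F * G = p ∧ IsCoprime F G ∧ F.map (residue R) = f ∧ G.map (residue R) = g := by
  have hn : p.natDegree = f.natDegree + g.natDegree := by
    rw [← hf.natDegree_mul hg, ← h, hp.natDegree_map]
  let P : MonicDegreeEq R p.natDegree := .mk p hp rfl
  let φ : UniversalCoprimeFactorizationRing f.natDegree g.natDegree hn P →ₐ[R] ResidueField R :=
    (UniversalCoprimeFactorizationRing.homEquiv _ f.natDegree g.natDegree hn P).symm
      ⟨(.mk f hf rfl, .mk g hg rfl), h.symm, hc⟩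
  obtain ⟨σ, hσ⟩ := s8_hensel_section R _ φ
  let q := UniversalCoprimeFactorizationRing.homEquiv R f.natDegree g.natDegree hn P σ
  have hcomp : (Algebra.ofId R (ResidueField R)).comp σ = φ := AlgHom.ext hσ
  refine ⟨q.1.1.1, q.1.2.1, by simpa [P, MonicDegreeEq.mk] using q.2.1, q.2.2, ?_, ?_⟩
  · have := UniversalCoprimeFactorizationRing.homEquiv_comp_fst (R := R) R f.natDegree g.natDegree hn P σ
      (Algebra.ofId R (ResidueField R))
    rw [hcomp] at this
    simp only [φ, Equiv.apply_symm_apply] at this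
    exact congr(($this).1).symm
  · have := UniversalCoprimeFactorizationRing.homEquiv_comp_snd (R := R) R f.natDegree g.natDegree hn P σ
      (Algebra.ofId R (ResidueField R))
    rw [hcomp] at this
    simp only [φ, Equiv.apply_symm_apply] at this
    exact congr(($this).1).symm

lemma s8_exists_idem (R : Type u) [CommRing R] [HenselianLocalRing R]
    (M : Type u) [AddCommGroup M] [Module R M] [Module.Finite R M] (e : Module.End R M)
    (he : ¬ IsUnit (1 - e)) :
    ∃ π s : Module.End R M, π * π = π ∧ π ≠ 0 ∧ π = e * s := by
  obtain ⟨p, hp, hpe⟩ : IsIntegral R e := Algebra.IsIntegral.isIntegral e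
  have hpe : aeval e p = 0 := hpe
  have hp0 : p.map (residue R) ≠ 0 := (hp.map _).ne_zero
  obtain ⟨q, hq, hq0⟩ := exists_eq_pow_rootMultiplicity_mul_and_not_dvd (p.map (residue R)) hp0 0
  set a := rootMultiplicity 0 (p.map (residue R))
  rw [C_0, sub_zero] at hq hq0
  have hqm : q.Monic := by
    have := hp.map (residue R)
    rw [hq] at this
    exact (monic_X_pow a).of_mul_monic_left this
  have hcop : IsCoprime ((X : (ResidueField R)[X]) ^ a) q := by
    apply IsCoprime.pow_left
    exact (irreducible_X.coprime_iff_not_dvd).mpr hq0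
  obtain ⟨F, G, hFG, ⟨U, V, hUV⟩, hF, hG⟩ := s8_hensel_factor R p hp _ q (monic_X_pow a) hqm hq hcop
  have hG0 : IsUnit (G.eval 0) := by
    rw [← isUnit_map_iff (residue R), isUnit_iff_ne_zero]
    intro h
    apply hq0
    rw [X_dvd_iff, ← hG, coeff_map, coeff_zero_eq_eval_zero, h]
  have hF1 : IsUnit (F.eval 1) := by
    rw [← isUnit_map_iff (residue R), isUnit_iff_ne_zero]
    have : residue R (F.eval 1) = (F.map (residue R)).eval 1 := by
      rw [Polynomial.eval_map]
      simpa using (Polynomial.eval₂_at_apply (residue R) (1 : R) (p := F)).symm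
    rw [this, hF]; simp
  have hz : aeval e F * aeval e G = 0 := by rw [← map_mul, hFG, hpe]
  have hone : aeval e (U * F) + aeval e (V * G) = 1 := by rw [← map_add, hUV, map_one]
  have hGπ : aeval e G * aeval e (U * F) = 0 := by
    rw [← map_mul, show G * (U * F) = U * (F * G) by ring, hFG, map_mul, hpe, mul_zero]
  obtain ⟨g, hg⟩ : X ∣ G - C (G.eval 0) := by
    rw [X_dvd_iff]; simp [coeff_zero_eq_eval_zero]
  obtain ⟨f, hf⟩ : (X - C 1) ∣ F - C (F.eval 1) := by
    rw [dvd_iff_isRoot]; simp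
  refine ⟨aeval e (U * F), aeval e (C (-(↑hG0.unit⁻¹ : R)) * g * (U * F)), ?_, ?_, ?_⟩
  · have h1 : aeval e (U * F) * aeval e (V * G) = 0 := by
      rw [← map_mul, show (U * F) * (V * G) = U * V * (F * G) by ring, hFG, map_mul, hpe, mul_zero]
    calc _ = aeval e (U * F) * (aeval e (U * F) + aeval e (V * G)) := by rw [mul_add, h1, add_zero]
      _ = _ := by rw [hone, mul_one]
  · intro h0
    apply he
    have hFe : aeval e F = 0 := by
      calc aeval e F = aeval e F * (aeval e (U * F) + aeval e (V * G)) := by rw [hone, mul_one]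
        _ = aeval e F * aeval e (U * F) + aeval e (V * (F * G)) := by
            rw [mul_add, ← map_mul _ F (V * G)]; congr 2; ring
        _ = 0 := by rw [h0, hFG, map_mul, hpe]; simp
    have h1 : aeval e (C (F.eval 1)) = (1 - e) * aeval e f := by
      have := congr(aeval e $hf)
      rw [map_sub, hFe, map_mul] at this
      simp only [map_sub, aeval_X, map_one] at this
      rw [zero_sub] at this
      rw [← neg_sub, neg_mul, ← this, neg_neg]
    have h2 : aeval e (C (F.eval 1)) = aeval e f * (1 - e) := by
      rw [h1]
      have : (1 - e) = aeval e (1 - X : R[X]) := by simp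
      rw [this, ← map_mul, ← map_mul, mul_comm]
    have hu : IsUnit (aeval e (C (F.eval 1))) := (hF1.map C).map (aeval e)
    have hcm : Commute (1 - e) (aeval e f) := by
      rw [Commute, SemiconjBy, ← h1, h2]
    rw [h1] at hu
    exact (hcm.isUnit_mul_iff.mp hu).1
  · have hGe : G = X * g + C (G.eval 0) := by rw [← hg]; ring
    have h3 : aeval e (X * g * (U * F)) + aeval e (C (G.eval 0) * (U * F)) = 0 := by
      rw [← map_add, ← add_mul, ← hGe, map_mul, hGπ]
    have h4 : e * aeval e (C (-(↑hG0.unit⁻¹ : R)) * g * (U * F)) =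
        aeval e (C (-(↑hG0.unit⁻¹ : R))) * aeval e (X * g * (U * F)) := by
      have h5 : e * aeval e (C (-(↑hG0.unit⁻¹ : R)) * g * (U * F)) =
        aeval e (X : R[X]) * aeval e (C (-(↑hG0.unit⁻¹ : R)) * g * (U * F)) := by rw [aeval_X]
      rw [h5, ← map_mul, ← map_mul]
      congr 1; ring
    rw [h4, eq_neg_of_add_eq_zero_left h3, mul_neg, ← map_mul, ← map_neg]
    congr 1
    rw [← mul_assoc, ← C_mul, neg_mul, IsUnit.val_inv_mul]
    simp
end HenselPart

section ExtPart
open Limits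

variable {R : Type u} [CommRing R]

lemma s8_ext_old {X Y : ModuleCat.{u} R} (P : ProjectiveResolution X) (n : ℕ) :
    ExtVanish R (n + 1) X Y ↔ ∀ f : P.complex.X (n + 1) ⟶ Y,
      P.complex.d (n + 2) (n + 1) ≫ f = 0 → ∃ g : P.complex.X n ⟶ Y,
        P.complex.d (n + 1) n ≫ g = f := by
  unfold ExtVanish
  rw [← ModuleCat.isZero_iff_subsingleton, (P.isoExt (R := R) (n + 1) Y).isZero_iff,
    ← HomologicalComplex.exactAt_iff_isZero_homology,
    HomologicalComplex.exactAt_iff' _ n (n + 1) (n + 2) (by simp) (by simp),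
    ShortComplex.moduleCat_exact_iff]
  constructor
  · intro h f hf
    exact h f hf
  · intro h f hf
    exact h f hf

lemma s8_ext_new {X Y : ModuleCat.{u} R} (P : ProjectiveResolution X) (n : ℕ) :
    Subsingleton (Abelian.Ext X Y (n + 1)) ↔ ∀ f : P.complex.X (n + 1) ⟶ Y,
      P.complex.d (n + 2) (n + 1) ≫ f = 0 → ∃ g : P.complex.X n ⟶ Y,
        P.complex.d (n + 1) n ≫ g = f := by
  constructor
  · intro h f hf
    exact (P.extMk_eq_zero_iff f (n + 2) rfl hf n rfl).mp (Subsingleton.elim _ _)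
  · intro h
    refine subsingleton_of_forall_eq 0 fun α => ?_
    obtain ⟨f, hf, rfl⟩ := P.extMk_surjective α (n + 2) rfl
    exact (P.extMk_eq_zero_iff f (n + 2) rfl hf n rfl).mpr (h f hf)

lemma s8_ext_iff (X Y : ModuleCat.{u} R) (n : ℕ) :
    ExtVanish R (n + 1) X Y ↔ Subsingleton (Abelian.Ext X Y (n + 1)) := by
  rw [s8_ext_old (projectiveResolution X), s8_ext_new (projectiveResolution X)]

/-- The short complex of an `IsSES`. -/
lemma s8_ses {A B C : ModuleCat.{u} R} {f : A →ₗ[R] B} {g : B →ₗ[R] C} (h : IsSES R f g) :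
    ∃ w : ModuleCat.ofHom f ≫ ModuleCat.ofHom g = 0,
      (ShortComplex.mk (ModuleCat.ofHom f) (ModuleCat.ofHom g) w).ShortExact := by
  have w : ModuleCat.ofHom f ≫ ModuleCat.ofHom g = 0 := by
    ext x
    exact h.2.1.apply_apply_eq_zero x
  refine ⟨w, ?_⟩
  have : Mono (ModuleCat.ofHom f) := (ModuleCat.mono_iff_injective _).mpr h.1
  have : Epi (ModuleCat.ofHom g) := (ModuleCat.epi_iff_surjective _).mpr h.2.2
  refine ShortComplex.ShortExact.mk ?_
  rw [ShortComplex.moduleCat_exact_iff]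
  intro x hx
  exact (h.2.1 x).mp hx

/-- Lifting along an epimorphism with kernel `Ext¹`-orthogonal. -/
lemma s8_lift {W Y X C : ModuleCat.{u} R} {f : Y →ₗ[R] X} {g : X →ₗ[R] C} (h : IsSES R f g)
    (hv : ExtVanish R 1 W Y) (u : W →ₗ[R] C) : ∃ v : W →ₗ[R] X, g ∘ₗ v = u := by
  obtain ⟨w, hS⟩ := s8_ses h
  have := (s8_ext_iff W Y 0).mp hv
  obtain ⟨x₂, hx₂⟩ := Abelian.Ext.covariant_sequence_exact₃ W hS
    (Abelian.Ext.mk₀ (ModuleCat.ofHom u)) (zero_add 1) (this.elim _ _)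
  obtain ⟨v, rfl⟩ := Abelian.Ext.mk₀_bijective _ _ |>.2 x₂
  rw [Abelian.Ext.mk₀_comp_mk₀] at hx₂
  have h2 := (Abelian.Ext.mk₀_bijective _ _).1 hx₂
  refine ⟨v.hom, ?_⟩
  have := congr(($h2).hom)
  simpa using this

/-- Dimension shifting. -/
lemma s8_shift {K F W Y : ModuleCat.{u} R} {f : K →ₗ[R] F} {g : F →ₗ[R] W} (h : IsSES R f g)
    [Module.Projective R F] (n : ℕ) (hv : ExtVanish R (n + 1) K Y) :
    ExtVanish R (n + 2) W Y := by
  obtain ⟨w, hS⟩ := s8_ses h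
  rw [s8_ext_iff] at hv ⊢
  have : Projective F := inferInstance
  refine subsingleton_of_forall_eq 0 fun x => ?_
  obtain ⟨x₁, rfl⟩ := Abelian.Ext.contravariant_sequence_exact₃ hS Y x
    (Abelian.Ext.eq_zero_of_projective (P := F) _) (show 1 + (n + 1) = n + 2 by omega)
  rw [hv.elim x₁ 0, Abelian.Ext.comp_zero]

lemma s8_ext_one {K F W Y : ModuleCat.{u} R} {f : K →ₗ[R] F} {g : F →ₗ[R] W} (h : IsSES R f g)
    [Module.Projective R F] (hv : ∀ u : K →ₗ[R] Y, ∃ v : F →ₗ[R] Y, v ∘ₗ f = u) :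
    ExtVanish R 1 W Y := by
  obtain ⟨w, hS⟩ := s8_ses h
  rw [s8_ext_iff]
  have : Projective F := inferInstance
  refine subsingleton_of_forall_eq 0 fun x => ?_
  obtain ⟨x₁, rfl⟩ := Abelian.Ext.contravariant_sequence_exact₃ hS Y x
    (Abelian.Ext.eq_zero_of_projective (P := F) _) (show 1 + 0 = 0 + 1 by omega)
  obtain ⟨u, rfl⟩ := Abelian.Ext.mk₀_bijective _ _ |>.2 x₁
  obtain ⟨v, hv⟩ := hv u.hom
  have : u = ModuleCat.ofHom f ≫ ModuleCat.ofHom v := by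
    ext1; simpa using hv.symm
  rw [this, ← Abelian.Ext.mk₀_comp_mk₀]
  exact hS.extClass_comp_assoc _
end ExtPart

section MinimalPart
variable {R : Type u} [CommRing R]

/-- Existence of a right minimal version. -/
lemma s8_minimal [IsNoetherianRing R] [HenselianLocalRing R]
    {X C : Type u} [AddCommGroup X] [Module R X] [Module.Finite R X] [AddCommGroup C] [Module R C]
    (f : X →ₗ[R] C) : ∃ π : Module.End R X, π * π = π ∧ f ∘ₗ π = 0 ∧
      ∀ g : Module.End R (LinearMap.ker π), f ∘ₗ (LinearMap.ker π).subtype ∘ₗ g =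
        f ∘ₗ (LinearMap.ker π).subtype → IsUnit g := by
  let S : Set (Submodule R X) := {N | ∃ π : Module.End R X, π * π = π ∧ f ∘ₗ π = 0 ∧
    LinearMap.range π = N}
  have hS : S.Nonempty := ⟨_, 0, by simp, by simp, rfl⟩
  obtain ⟨N, ⟨π, h1, h2, rfl⟩, hmax⟩ :=
    set_has_maximal_iff_noetherian.mpr (inferInstance : IsNoetherian R X) S hS
  refine ⟨π, h1, h2, fun g hg => ?_⟩
  by_contra hgu
  have h1' : ∀ x, π (π x) = π x := fun x => LinearMap.congr_fun h1 x
  have h2' : ∀ x, f (π x) = 0 := fun x => LinearMap.congr_fun h2 x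
  obtain ⟨ρ, s, hρ, hρ0, hρs⟩ := s8_exists_idem R (LinearMap.ker π) (1 - g) (by simpa using hgu)
  have hfρ : ∀ x, f (ρ x : X) = 0 := by
    intro x
    have := LinearMap.congr_fun hg (s x)
    simp only [LinearMap.comp_apply, Submodule.subtype_apply] at this
    rw [hρs]
    simp [this]
  have hρ' : ∀ x, ρ (ρ x) = ρ x := fun x => LinearMap.congr_fun hρ x
  let r : X →ₗ[R] LinearMap.ker π := (LinearMap.id - π).codRestrict _ (by
    intro x; simp [LinearMap.mem_ker, h1'])
  have hr : ∀ x : LinearMap.ker π, r x = x := by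
    intro x
    ext
    simp [r]
  have hrπ : ∀ x, r (π x) = 0 := by
    intro x; ext; simp [r, h1']
  have hπρ : ∀ x, π (ρ x : X) = 0 := fun x => (ρ x).2
  let π' : Module.End R X := π + (LinearMap.ker π).subtype ∘ₗ ρ ∘ₗ r
  have hπ' : ∀ x, π' x = π x + ρ (r x) := fun x => rfl
  have hmem : LinearMap.range π' ∈ S := by
    refine ⟨π', ?_, ?_, rfl⟩
    · ext x
      simp [hπ', h1', hrπ, hπρ, hr, hρ']
    · ext x
      simp [hπ', h2', hfρ]
  apply hmax _ hmem
  refine lt_of_le_of_ne ?_ ?_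
  · rintro _ ⟨x, rfl⟩
    exact ⟨π x, by simp [hπ', h1', hrπ]⟩
  · intro heq
    apply hρ0
    ext x
    have : (ρ x : X) ∈ LinearMap.range π := by
      rw [heq]
      refine ⟨x, ?_⟩
      have hx : π (x : X) = 0 := x.2
      simp [hπ', hr, hx]
    obtain ⟨y, hy⟩ := this
    have h3 := hπρ x
    rw [← hy, h1'] at h3
    rw [← hy, h3]; simp
end MinimalPart

section MainPart
variable {R : Type u} [CommRing R]

lemma s8_syz {𝒳 : Set (ModuleCat.{u} R)} (h𝒳 : IsResolving R 𝒳) {W : ModuleCat.{u} R}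
    (hW : W ∈ 𝒳) : ∃ (K F : ModuleCat.{u} R) (f : K →ₗ[R] F) (g : F →ₗ[R] W),
      IsSES R f g ∧ K ∈ 𝒳 ∧ F ∈ 𝒳 ∧ Module.Projective R F := by
  have := h𝒳.finite W hW
  obtain ⟨n, g, hg⟩ := Module.Finite.exists_fin' R W
  let F : ModuleCat.{u} R := ModuleCat.of R (Fin n → R)
  have hF : F ∈ 𝒳 := h𝒳.freeMem F (inferInstanceAs (Module.Finite R (Fin n → R)))
    (inferInstanceAs (Module.Free R (Fin n → R)))
  let K : ModuleCat.{u} R := ModuleCat.of R (LinearMap.ker g)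
  have hs : IsSES R (A := K) (B := F) (C := W) (LinearMap.ker g).subtype g :=
    ⟨Subtype.val_injective, LinearMap.exact_subtype_ker_map g, hg⟩
  exact ⟨K, F, _, g, hs, h𝒳.kerClosed _ _ _ _ _ hs hF hW, hF,
    inferInstanceAs (Module.Projective R (Fin n → R))⟩

lemma s8_pushout {𝒳 : Set (ModuleCat.{u} R)} (h𝒳 : IsResolving R 𝒳)
    {K F W X : ModuleCat.{u} R} {i : K →ₗ[R] F} {q : F →ₗ[R] W} (h : IsSES R i q)
    (hW : W ∈ 𝒳) (hX : X ∈ 𝒳) (u : K →ₗ[R] X) :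
    ∃ (E : ModuleCat.{u} R) (a : X →ₗ[R] E) (b : F →ₗ[R] E), E ∈ 𝒳 ∧ a ∘ₗ u = b ∘ₗ i ∧
      ∀ (C : ModuleCat.{u} R) (s : X →ₗ[R] C) (t : F →ₗ[R] C), s ∘ₗ u = t ∘ₗ i →
        ∃ v : E →ₗ[R] C, v ∘ₗ a = s ∧ v ∘ₗ b = t := by
  let N : Submodule R (X × F) := LinearMap.range (u.prod (-i))
  let E : ModuleCat.{u} R := ModuleCat.of R ((X × F) ⧸ N)
  let a : X →ₗ[R] E := N.mkQ ∘ₗ LinearMap.inl R X F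
  let b : F →ₗ[R] E := N.mkQ ∘ₗ LinearMap.inr R X F
  have hab : a ∘ₗ u = b ∘ₗ i := by
    ext k
    change N.mkQ (u k, 0) = N.mkQ (0, i k)
    rw [← sub_eq_zero, ← map_sub]
    rw [Submodule.mkQ_apply, Submodule.Quotient.mk_eq_zero]
    exact ⟨k, by simp⟩
  have hlift : ∀ (C : ModuleCat.{u} R) (s : X →ₗ[R] C) (t : F →ₗ[R] C), s ∘ₗ u = t ∘ₗ i →
        ∃ v : E →ₗ[R] C, v ∘ₗ a = s ∧ v ∘ₗ b = t := by
    intro C s t hst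
    refine ⟨N.liftQ (s.coprod t) ?_, ?_, ?_⟩
    · rintro _ ⟨k, rfl⟩
      have := LinearMap.congr_fun hst k
      simp only [LinearMap.comp_apply] at this
      simp [LinearMap.mem_ker, this]
    · ext x
      change s.coprod t (x, 0) = _
      simp
    · ext x
      change s.coprod t (0, x) = _
      simp
  obtain ⟨v, hva, hvb⟩ := hlift W 0 q (by
    ext k
    simpa using (h.2.1.apply_apply_eq_zero k).symm)
  have hses : IsSES R a v := by
    refine ⟨?_, ?_, ?_⟩
    · rw [← LinearMap.ker_eq_bot, LinearMap.ker_eq_bot']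
      intro x hx
      have hx : N.mkQ (x, 0) = 0 := hx
      rw [Submodule.mkQ_apply, Submodule.Quotient.mk_eq_zero] at hx
      obtain ⟨k, hk⟩ := hx
      have h1 : u k = x := congr(($hk).1)
      have h2 : -i k = 0 := congr(($hk).2)
      have h3 : k = 0 := h.1 (by simpa using h2)
      rw [← h1, h3, map_zero]
    · intro y
      constructor
      · intro hy
        obtain ⟨⟨x, p⟩, rfl⟩ := N.mkQ_surjective y
        have hsp : N.mkQ (x, p) = a x + b p := by
          change _ = N.mkQ (x, 0) + N.mkQ (0, p)
          rw [← map_add]; simp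
        rw [hsp, map_add] at hy
        have h1 : v (a x) = 0 := LinearMap.congr_fun hva x
        have h2 : v (b p) = q p := LinearMap.congr_fun hvb p
        rw [h1, h2, zero_add] at hy
        obtain ⟨k, rfl⟩ := (h.2.1 p).mp hy
        refine ⟨x + u k, ?_⟩
        rw [hsp, map_add]
        congr 1
        exact LinearMap.congr_fun hab k
      · rintro ⟨x, rfl⟩
        exact LinearMap.congr_fun hva x
    · intro w
      obtain ⟨p, rfl⟩ := h.2.2 w
      exact ⟨b p, LinearMap.congr_fun hvb p⟩
  exact ⟨E, a, b, h𝒳.extClosed _ _ _ _ _ hses hX hW, hab, hlift⟩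

/-- Wakamatsu's lemma, all degrees. -/
lemma s8_wakamatsu {𝒳 : Set (ModuleCat.{u} R)} (h𝒳 : IsResolving R 𝒳)
    {X C : ModuleCat.{u} R} (f : X →ₗ[R] C) (hf : IsRightApprox R 𝒳 f)
    (hmin : ∀ g : Module.End R X, f ∘ₗ g = f → IsUnit g) (n : ℕ) :
    ∀ W ∈ 𝒳, ExtVanish R (n + 1) W (ModuleCat.of R (LinearMap.ker f)) := by
  induction n with
  | succ n ih =>
    intro W hW
    obtain ⟨K, F, i, q, h, hK, hF, hproj⟩ := s8_syz h𝒳 hW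
    exact s8_shift h n (ih K hK)
  | zero =>
    intro W hW
    obtain ⟨K, F, i, q, h, hK, hF, hproj⟩ := s8_syz h𝒳 hW
    refine s8_ext_one h fun u => ?_
    let ι : LinearMap.ker f →ₗ[R] X := (LinearMap.ker f).subtype
    let u' : K →ₗ[R] LinearMap.ker f := u
    obtain ⟨E, a, b, hE, hab, hlift⟩ := s8_pushout h𝒳 h hW hf.1 (ι ∘ₗ u')
    obtain ⟨v, hva, hvb⟩ := hlift C f 0 (by
      ext k
      simpa [ι] using (u' k).2)
    obtain ⟨t, ht⟩ := hf.2 E hE v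
    obtain ⟨g, hg⟩ := hmin (t ∘ₗ a) (by rw [← LinearMap.comp_assoc, ht, hva])
    have hfg : f ∘ₗ (g : Module.End R X) = f := by
      rw [hg, ← LinearMap.comp_assoc, ht, hva]
    have hgi : ∀ x, (↑g⁻¹ : Module.End R X) ((g : Module.End R X) x) = x := fun x =>
      LinearMap.congr_fun g.inv_mul x
    have hgi' : ∀ x, (g : Module.End R X) ((↑g⁻¹ : Module.End R X) x) = x := fun x =>
      LinearMap.congr_fun g.mul_inv x
    have hfgi : ∀ x, f ((↑g⁻¹ : Module.End R X) x) = f x := fun x => by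
      have := LinearMap.congr_fun hfg ((↑g⁻¹ : Module.End R X) x)
      rw [LinearMap.comp_apply, hgi'] at this
      exact this.symm
    let w : F →ₗ[R] X := (↑g⁻¹ : Module.End R X) ∘ₗ t ∘ₗ b
    refine ⟨w.codRestrict (LinearMap.ker f) ?_, ?_⟩
    · intro p
      rw [LinearMap.mem_ker]
      change f ((↑g⁻¹ : Module.End R X) (t (b p))) = 0
      rw [hfgi]
      have h1 : f (t (b p)) = v (b p) := LinearMap.congr_fun ht _
      rw [h1]
      exact LinearMap.congr_fun hvb p
    · refine LinearMap.ext fun k => Subtype.ext ?_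
      change (↑g⁻¹ : Module.End R X) (t (b (i k))) = (u' k : X)
      have h1 : a (u' k : X) = b (i k) := LinearMap.congr_fun hab k
      rw [← h1]
      have h2 : t (a (u' k : X)) = (g : Module.End R X) (u' k) := by rw [hg]; rfl
      rw [h2, hgi]

lemma s8_forward [IsNoetherianRing R] [HenselianLocalRing R]
    {𝒳 : Set (ModuleCat.{u} R)} (h𝒳 : IsResolving R 𝒳)
    (C : ModuleCat.{u} R) (hC : MemCC R 𝒳 C) :
      ∃ (Y X : ModuleCat.{u} R) (f : ↥Y →ₗ[R] ↥X) (g : ↥X →ₗ[R] ↥C),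
        IsSES R f g ∧ X ∈ 𝒳 ∧ HasRightApprox R 𝒳 Y ∧ Y ∈ XPerp R 𝒳 := by
  obtain ⟨X₀, X₁, g, f, hX₀, hX₁, hex⟩ := hC
  have := h𝒳.finite X₀ hX₀
  obtain ⟨π, hπ, hfπ, hmin⟩ := s8_minimal f
  have hπ' : ∀ x, π (π x) = π x := fun x => LinearMap.congr_fun hπ x
  have hfπ' : ∀ x, f (π x) = 0 := fun x => LinearMap.congr_fun hfπ x
  let X : ModuleCat.{u} R := ModuleCat.of R (LinearMap.ker π)
  let N : ModuleCat.{u} R := ModuleCat.of R (LinearMap.range π)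
  have hcompl : IsCompl (LinearMap.ker π) (LinearMap.range π) :=
    (LinearMap.IsIdempotentElem.isCompl hπ).symm
  have hX : X ∈ 𝒳 := h𝒳.summandClosed X N
    (h𝒳.isoClosed hX₀ (Submodule.prodEquivOfIsCompl _ _ hcompl).symm)
  have hXfin := h𝒳.finite X hX
  let ι : X →ₗ[R] X₀ := (LinearMap.ker π).subtype
  let r : X₀ →ₗ[R] X := (LinearMap.id - π).codRestrict (LinearMap.ker π) (by
    intro x; simp [LinearMap.mem_ker, hπ'])
  have hιr : ∀ x, ι (r x) = x - π x := fun x => rfl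
  have hrι : ∀ x, r (ι x) = x := fun x => by
    apply Subtype.ext
    change ι x - π (ι x) = ι x
    have : π (ι x) = 0 := x.2
    rw [this, sub_zero]
  let f' : X →ₗ[R] C := f ∘ₗ ι
  have hf'r : ∀ x, f' (r x) = f x := fun x => by
    change f (ι (r x)) = f x
    rw [hιr, map_sub, hfπ', sub_zero]
  have happ : IsRightApprox R 𝒳 f' := by
    refine ⟨hX, fun W hW u => ?_⟩
    obtain ⟨h, hh⟩ := (hex W hW).1 u
    refine ⟨r ∘ₗ h, ?_⟩
    ext x
    change f' (r (h x)) = u x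
    rw [hf'r]
    exact LinearMap.congr_fun hh x
  have hsurj : Function.Surjective f' := by
    intro c
    obtain ⟨h, hh⟩ := happ.2 (ModuleCat.of R R)
      (h𝒳.freeMem _ (inferInstanceAs (Module.Finite R R)) (inferInstanceAs (Module.Free R R)))
      (LinearMap.toSpanSingleton R C c)
    refine ⟨h (1 : R), ?_⟩
    have := LinearMap.congr_fun hh (1 : R)
    simpa using this
  let Y : ModuleCat.{u} R := ModuleCat.of R (LinearMap.ker f')
  have hfg : ∀ x, f (g x) = 0 := by
    have := ((hex X₁ hX₁).2 (g ∘ₗ LinearMap.id)).mpr ⟨LinearMap.id, rfl⟩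
    exact fun x => LinearMap.congr_fun this x
  let g' : X₁ →ₗ[R] Y := (r ∘ₗ g).codRestrict (LinearMap.ker f') (by
    intro x
    rw [LinearMap.mem_ker]
    change f' (r (g x)) = 0
    rw [hf'r, hfg])
  refine ⟨Y, X, (LinearMap.ker f').subtype, f',
    ⟨Subtype.val_injective, LinearMap.exact_subtype_ker_map f', hsurj⟩, hX, ⟨X₁, g', hX₁, ?_⟩,
    ?_, ?_⟩
  · intro W hW u
    let j : Y →ₗ[R] X := (LinearMap.ker f').subtype
    obtain ⟨h, hh⟩ := ((hex W hW).2 (ι ∘ₗ j ∘ₗ u)).mp (by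
      ext x
      exact (u x).2)
    refine ⟨h, ?_⟩
    refine LinearMap.ext fun x => Subtype.ext ?_
    change r (g (h x)) = j (u x)
    have h1 : g (h x) = ι (j (u x)) := LinearMap.congr_fun hh x
    rw [h1, hrι]
  · exact inferInstanceAs (Module.Finite R (LinearMap.ker f'))
  · intro W hW i hi
    obtain ⟨n, rfl⟩ : ∃ n, i = n + 1 := ⟨i - 1, by omega⟩
    exact s8_wakamatsu h𝒳 f' happ hmin n W hW

lemma s8_backward {𝒳 : Set (ModuleCat.{u} R)} (C : ModuleCat.{u} R)
    (h : ∃ (Y X : ModuleCat.{u} R) (f : ↥Y →ₗ[R] ↥X) (g : ↥X →ₗ[R] ↥C),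
        IsSES R f g ∧ X ∈ 𝒳 ∧ HasRightApprox R 𝒳 Y ∧ Y ∈ XPerp R 𝒳) : MemCC R 𝒳 C := by
  obtain ⟨Y, X, f, g, hs, hX, ⟨X₁, p, hX₁, hp⟩, hfin, hY⟩ := h
  refine ⟨X, X₁, f ∘ₗ p, g, hX, hX₁, fun W hW => ⟨fun u => ?_, fun u => ⟨fun hu => ?_, ?_⟩⟩⟩
  · exact s8_lift hs (hY W hW 1 one_pos) u
  · let e := LinearEquiv.ofInjective f hs.1
    let u' : W →ₗ[R] LinearMap.range f := u.codRestrict _ (fun x =>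
      (hs.2.1 (u x)).mp (LinearMap.congr_fun hu x))
    obtain ⟨h, hh⟩ := hp W hW (e.symm.toLinearMap ∘ₗ u')
    refine ⟨h, ?_⟩
    ext x
    change f (p (h x)) = u x
    have h1 : p (h x) = e.symm (u' x) := LinearMap.congr_fun hh x
    rw [h1]
    exact congrArg Subtype.val (e.apply_symm_apply (u' x))
  · rintro ⟨h, rfl⟩
    ext x
    exact hs.2.1.apply_apply_eq_zero _
end MainPart

/-- Over a henselian Gorenstein local ring, a finitely generated module `C`
belongs to `𝒞(𝒳)` iff there is a short exact sequence `0 → Y → X → C → 0` with `X ∈ 𝒳`,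
`Y ∈ rap 𝒳` and `Y ∈ 𝒳^⊥`. -/
theorem stmt8 (R : Type u) [CommRing R] [IsNoetherianRing R] [IsLocalRing R]
    [HenselianLocalRing R] (hG : IsGorensteinLocalRing R)
    (𝒳 : Set (ModuleCat.{u} R)) (h𝒳 : IsResolving R 𝒳)
    (C : ModuleCat.{u} R) (hCfg : Module.Finite R C) :
    MemCC R 𝒳 C ↔
      ∃ (Y X : ModuleCat.{u} R) (f : ↥Y →ₗ[R] ↥X) (g : ↥X →ₗ[R] ↥C),
        IsSES R f g ∧ X ∈ 𝒳 ∧ HasRightApprox R 𝒳 Y ∧ Y ∈ XPerp R 𝒳 := by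
  exact ⟨s8_forward h𝒳 C, s8_backward C⟩
end

section
/- Let R be a henselian Gorenstein Noetherian local ring, 𝒳 a resolving subcategory of the category of finitely generated R-modules, and C a finitely generated R-module with C ∈ 𝒞(𝒳). Then there exist finitely generated R-modules X₀ ∈ 𝒳 and X₁ ∈ 𝒳 ∩ 𝒳^⊥ and an exact sequence X₁ → X₀ → C → 0 of R-modules such that for every W ∈ 𝒳 the induced sequence Hom_R(W, X₁) → Hom_R(W, X₀) → Hom_R(W, C) → 0 is exact. -/
open CategoryTheory IsLocalRing

universe u

open Polynomial in
theorem hens_section {R : Type u} [CommRing R] [HenselianLocalRing R] {S : Type u} [CommRing S]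
    [Algebra R S] [Algebra.Etale R S] (φ : S →ₐ[R] ResidueField R) :
    ∃ σ : S →ₐ[R] R, (IsScalarTower.toAlgHom R R (ResidueField R)).comp σ = φ := by
  have hQ : (RingHom.ker φ).IsPrime := RingHom.ker_isPrime φ
  obtain ⟨f, hf, _⟩ := Algebra.IsEtaleAt.exists_isStandardEtale (R := R) (RingHom.ker φ)
  have hfu : IsUnit (φ f) := by
    rw [isUnit_iff_ne_zero]; exact hf
  let ψ : Localization.Away f →ₐ[R] ResidueField R :=
    IsLocalization.Away.liftAlgHom (x := f) (f := φ) hfu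
  have hψ : ∀ s, ψ (algebraMap S _ s) = φ s := fun s => by
    simp [ψ]
  obtain ⟨P⟩ := Algebra.IsStandardEtale.nonempty_standardEtalePresentation (R := R)
    (S := Localization.Away f)
  have hm := P.hasMap.map ψ
  have hH : ∀ f : R[X], f.Monic → ∀ a₀ : ResidueField R, aeval a₀ f = 0 →
      aeval a₀ (derivative f) ≠ 0 → ∃ a : R, f.IsRoot a ∧ residue R a = a₀ :=
    by
    intro f hf a₀ h1 h2
    obtain ⟨b, rfl⟩ := residue_surjective a₀
    rw [← ResidueField.algebraMap_eq, aeval_algebraMap_apply, ResidueField.algebraMap_eq,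
      coe_aeval_eq_eval] at h1 h2
    obtain ⟨a, ha, hab⟩ := HenselianLocalRing.is_henselian f hf b
      ((residue_eq_zero_iff _).mp h1) (by
        rw [← isUnit_map_iff (residue R), isUnit_iff_ne_zero]; exact h2)
    refine ⟨a, ha, ?_⟩
    rw [← sub_eq_zero, ← map_sub]
    exact (residue_eq_zero_iff _).mpr hab
  obtain ⟨a, ha, ha'⟩ := hH P.f P.monic_f (ψ P.x) hm.1
    hm.isUnit_derivative_f.ne_zero
  have ha2 : P.P.HasMap a := by
    refine ⟨by simpa [IsRoot] using ha, ?_⟩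
    have h2 := hm.2
    rw [← ha', ← ResidueField.algebraMap_eq, aeval_algebraMap_apply, ResidueField.algebraMap_eq] at h2
    exact (isUnit_map_iff (residue R) _).mp h2
  let τ : Localization.Away f →ₐ[R] R := (P.lift a ha2).comp P.equivRing.toAlgHom
  have hτ : (IsScalarTower.toAlgHom R R (ResidueField R)).comp τ = ψ := by
    apply P.hom_ext
    simp [τ, ha']
  refine ⟨τ.comp (IsScalarTower.toAlgHom R S _), ?_⟩
  ext s
  rw [← hψ, ← hτ]
  rfl

open Polynomial in
theorem hens_factor {R : Type u} [CommRing R] [HenselianLocalRing R] (p : R[X]) (hp : p.Monic)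
    (a b : (ResidueField R)[X]) (ha : a.Monic) (hb : b.Monic) (hab : IsCoprime a b)
    (h : p.map (residue R) = a * b) :
    ∃ u v : R[X], p = u * v ∧ IsCoprime u v ∧ u.map (residue R) = a ∧ v.map (residue R) = b := by
  have hn : p.natDegree = a.natDegree + b.natDegree := by
    rw [← ha.natDegree_mul hb, ← h, hp.natDegree_map]
  let p' : MonicDegreeEq R p.natDegree := .mk p hp rfl
  let q : { q : MonicDegreeEq (ResidueField R) a.natDegree × MonicDegreeEq (ResidueField R) b.natDegree //
      q.1.1 * q.2.1 = p'.1.map (algebraMap R (ResidueField R)) ∧ IsCoprime q.1.1 q.2.1 } :=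
    ⟨(.mk a ha rfl, .mk b hb rfl), h.symm, hab⟩
  obtain ⟨σ, hσ⟩ := hens_section
    ((UniversalCoprimeFactorizationRing.homEquiv (ResidueField R) _ _ hn p').symm q)
  have h1 := UniversalCoprimeFactorizationRing.homEquiv_comp_fst _ _ _ hn p' σ
    (IsScalarTower.toAlgHom R R (ResidueField R))
  have h2 := UniversalCoprimeFactorizationRing.homEquiv_comp_snd _ _ _ hn p' σ
    (IsScalarTower.toAlgHom R R (ResidueField R))
  rw [hσ, Equiv.apply_symm_apply] at h1 h2
  set w := UniversalCoprimeFactorizationRing.homEquiv R _ _ hn p' σ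
  refine ⟨w.1.1.1, w.1.2.1, ?_, w.2.2, ?_, ?_⟩
  · rw [w.2.1]; simp [p', MonicDegreeEq.mk]
  · simpa [q] using! congrArg Subtype.val h1.symm
  · simpa [q] using! congrArg Subtype.val h2.symm

open Polynomial in
theorem fitting_aux {R : Type u} [CommRing R] [HenselianLocalRing R] {Z M : Type u}
    [AddCommGroup Z] [Module R Z] [AddCommGroup M] [Module R M] [Module.Finite R Z]
    (f : Z →ₗ[R] M) (φ : Z →ₗ[R] Z) (hφ : f ∘ₗ φ = f) :
    ∃ A B : Submodule R Z, IsCompl A B ∧ A ≤ LinearMap.ker f ∧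
      (A = ⊥ → Function.Bijective φ) := by
  obtain ⟨p, hp, hpφ⟩ := LinearMap.exists_monic_and_aeval_eq_zero R φ
  obtain ⟨q, hq, hq'⟩ := exists_eq_pow_rootMultiplicity_mul_and_not_dvd
      (p.map (residue R)) (hp.map _).ne_zero 0
  set m := rootMultiplicity 0 (p.map (residue R))
  rw [C_0, sub_zero] at hq hq'
  have hqm : q.Monic := by
    simpa [(hp.map (residue R)).leadingCoeff] using! congr(leadingCoeff $hq).symm
  have hcop : IsCoprime (X ^ m) q :=
    IsCoprime.pow_left ((prime_X (R := ResidueField R)).irreducible.coprime_iff_not_dvd.mpr hq')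
  obtain ⟨u, v, rfl, huv, hu, hv⟩ := hens_factor p hp _ q (monic_X.pow m) hqm hcop hq
  have hsup := sup_ker_aeval_eq_ker_aeval_mul_of_coprime φ huv
  rw [hpφ, LinearMap.ker_zero] at hsup
  refine ⟨_, _, ⟨disjoint_ker_aeval_of_isCoprime φ huv, codisjoint_iff.mpr hsup⟩, ?_, ?_⟩
  · have key : ∀ (r : R[X]) (x : Z), f (aeval φ r x) = r.eval 1 • f x := by
      intro r x
      have hpow : ∀ n : ℕ, ∀ x, f ((φ ^ n) x) = f x := by
        intro n
        induction n with
        | zero => simp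
        | succ n ih =>
          intro x
          rw [pow_succ, Module.End.mul_apply, ih]
          exact LinearMap.congr_fun hφ x
      induction r using Polynomial.induction_on' with
      | add r s hr hs => simp [hr, hs, add_smul]
      | monomial n c => simp [aeval_monomial, hpow]
    intro x hx
    rw [LinearMap.mem_ker] at hx ⊢
    have h1 : u.eval 1 • f x = 0 := by rw [← key, hx, map_zero]
    have hun : IsUnit (u.eval 1) := by
      refine (isUnit_map_iff (residue R) _).mp ?_
      have : residue R (u.eval 1) = (u.map (residue R)).eval 1 := by
        rw [Polynomial.eval_map, ← map_one (residue R), eval₂_at_apply]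
      rw [this, hu]; simp
    exact (hun.smul_eq_zero).mp h1
  · intro hA
    rw [hA, bot_sup_eq, LinearMap.ker_eq_top] at hsup
    have hv0 : IsUnit (v.eval 0) := by
      refine (isUnit_map_iff (residue R) _).mp ?_
      have : residue R (v.eval 0) = (v.map (residue R)).eval 0 := by
        rw [Polynomial.eval_map, ← map_zero (residue R), eval₂_at_apply]
      rw [this, hv, isUnit_iff_ne_zero, ← coeff_zero_eq_eval_zero]
      rwa [X_dvd_iff] at hq'
    obtain ⟨c, hc⟩ := hv0
    rw [← divX_mul_X_add v, coeff_zero_eq_eval_zero, ← hc] at hsup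
    have h2 : ∀ x, aeval φ v.divX (φ x) = -((c : R) • x) := fun x => by
      have := LinearMap.congr_fun hsup x
      simp only [map_add, map_mul, aeval_X, aeval_C, LinearMap.add_apply, Module.End.mul_apply,
        Module.algebraMap_end_apply, LinearMap.zero_apply] at this
      exact eq_neg_of_add_eq_zero_left this
    have hcomm : ∀ x, φ (aeval φ v.divX x) = aeval φ v.divX (φ x) := fun x => by
      have : (aeval φ (X * v.divX)) x = (aeval φ (v.divX * X)) x := by rw [mul_comm]
      simpa using this
    constructor
    · intro x y hxy
      have := h2 x
      rw [hxy, h2 y, neg_inj] at this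
      have := congrArg (fun z => (↑c⁻¹ : R) • z) this
      simpa [smul_smul] using this.symm
    · intro y
      refine ⟨-((↑c⁻¹ : R) • aeval φ v.divX y), ?_⟩
      rw [map_neg, map_smul, hcomm, h2, smul_neg, neg_neg, smul_smul, Units.inv_mul, one_smul]

theorem exists_min {R : Type u} [CommRing R] [IsNoetherianRing R] [HenselianLocalRing R]
    {X M : Type u}
    [AddCommGroup X] [Module R X] [AddCommGroup M] [Module R M] [Module.Finite R X]
    (f : X →ₗ[R] M) :
    ∃ N X' : Submodule R X, IsCompl N X' ∧ N ≤ LinearMap.ker f ∧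
      ∀ φ : X' →ₗ[R] X', (f ∘ₗ X'.subtype) ∘ₗ φ = f ∘ₗ X'.subtype → Function.Bijective φ := by
  obtain ⟨N, ⟨hN, X', hc⟩, hmax⟩ := set_has_maximal_iff_noetherian.mpr (inferInstanceAs (IsNoetherian R X))
    {N : Submodule R X | N ≤ LinearMap.ker f ∧ ∃ X', IsCompl N X'} ⟨⊥, bot_le, ⊤, isCompl_bot_top⟩
  refine ⟨N, X', hc, hN, fun φ hφ => ?_⟩
  obtain ⟨A, B, hAB, hA, himp⟩ := fitting_aux (f ∘ₗ X'.subtype) φ hφ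
  apply himp
  have hle : A.map X'.subtype ≤ LinearMap.ker f := by
    rintro _ ⟨a, ha, rfl⟩
    exact hA ha
  have hmem : N ⊔ A.map X'.subtype ∈ {N : Submodule R X | N ≤ LinearMap.ker f ∧ ∃ X', IsCompl N X'} := by
    refine ⟨sup_le hN hle, B.map X'.subtype, ?_⟩
    have hd : Disjoint (A.map X'.subtype) (B.map X'.subtype) :=
      Submodule.disjoint_map X'.injective_subtype hAB.disjoint
    have hs : A.map X'.subtype ⊔ B.map X'.subtype = X' := by
      rw [← Submodule.map_sup, hAB.sup_eq_top, Submodule.map_subtype_top]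
    refine ⟨?_, ?_⟩
    · refine Disjoint.disjoint_sup_left_of_disjoint_sup_right hd ?_
      rw [hs]; exact hc.disjoint
    · rw [codisjoint_iff, sup_assoc, hs, hc.sup_eq_top]
  have hnlt := hmax _ hmem
  have heq : N = N ⊔ A.map X'.subtype := by
    by_contra hne
    exact hnlt (lt_of_le_of_ne le_sup_left hne)
  have hAN : A.map X'.subtype ≤ N := by rw [heq]; exact le_sup_right
  have hAX : A.map X'.subtype ≤ X' := Submodule.map_subtype_le _ _
  have : A.map X'.subtype = ⊥ := le_bot_iff.mp (hc.disjoint hAN hAX)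
  exact Submodule.map_injective_of_injective X'.injective_subtype (by simpa using this)

/-- Extension property: every map from a syzygy of an object of `𝒳` to `Y` extends. -/
def ExtProp (R : Type u) [CommRing R] (𝒳 : Set (ModuleCat.{u} R)) (Y : Type u)
    [AddCommGroup Y] [Module R Y] : Prop :=
  ∀ (W P : ModuleCat.{u} R), W ∈ 𝒳 → Module.Finite R P → Module.Free R P →
    ∀ (π : ↥P →ₗ[R] ↥W), Function.Surjective π → ∀ α : LinearMap.ker π →ₗ[R] Y,
      ∃ β : ↥P →ₗ[R] Y, ∀ a : LinearMap.ker π, β a = α a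

theorem extProp_ker {R : Type u} [CommRing R] {𝒳 : Set (ModuleCat.{u} R)} (h𝒳 : IsResolving R 𝒳)
    {X M : ModuleCat.{u} R} (f : ↥X →ₗ[R] ↥M) (hf : IsRightApprox R 𝒳 f)
    (hmin : ∀ φ : ↥X →ₗ[R] ↥X, f ∘ₗ φ = f → Function.Bijective φ) :
    ExtProp R 𝒳 (LinearMap.ker f) := by
  intro W P hW _ _ π hπ α
  let S : Submodule R (↥X × ↥P) :=
    LinearMap.range (((LinearMap.ker f).subtype ∘ₗ α).prod (-(LinearMap.ker π).subtype))
  let E : ModuleCat.{u} R := ModuleCat.of R ((↥X × ↥P) ⧸ S)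
  let ι : ↥X →ₗ[R] ↥E := S.mkQ ∘ₗ LinearMap.inl R _ _
  let ρ : ↥E →ₗ[R] ↥W := S.liftQ (π ∘ₗ LinearMap.snd R _ _) (by
    rintro _ ⟨a, rfl⟩
    simp)
  let ft : ↥E →ₗ[R] ↥M := S.liftQ (f ∘ₗ LinearMap.fst R _ _) (by
    rintro _ ⟨a, rfl⟩
    simp)
  have hE : E ∈ 𝒳 := by
    refine h𝒳.extClosed X E W ι ρ ⟨?_, ?_, ?_⟩ hf.1 hW
    · rw [injective_iff_map_eq_zero]
      intro x hx
      obtain ⟨a, ha⟩ := (Submodule.Quotient.mk_eq_zero S).mp hx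
      have h1 := congrArg Prod.fst ha
      have h2 := congrArg Prod.snd ha
      simp at h1 h2
      rw [← h1, h2]; simp
    · intro e
      obtain ⟨⟨x, p⟩, rfl⟩ := Submodule.mkQ_surjective S e
      constructor
      · intro h
        have hp : p ∈ LinearMap.ker π := h
        refine ⟨x + α ⟨p, hp⟩, ?_⟩
        refine (Submodule.Quotient.eq S).mpr ?_
        refine ⟨⟨p, hp⟩, ?_⟩
        ext <;> simp
      · rintro ⟨y, hy⟩
        rw [← hy]
        exact map_zero π
    · intro w
      obtain ⟨p, rfl⟩ := hπ w
      exact ⟨S.mkQ (0, p), rfl⟩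
  obtain ⟨h, hh⟩ := hf.2 E hE ft
  have hφ := hmin (h ∘ₗ ι) (by
    rw [← LinearMap.comp_assoc, hh]
    rfl)
  let φ := LinearEquiv.ofBijective _ hφ
  have hφ' : ∀ x, f (φ.symm x) = f x := fun x => by
    obtain ⟨y, rfl⟩ := φ.surjective x
    rw [φ.symm_apply_apply]
    have : f (h (ι y)) = ft (ι y) := LinearMap.congr_fun hh _
    refine Eq.trans ?_ this.symm
    rfl
  let j : ↥P →ₗ[R] ↥E := S.mkQ ∘ₗ LinearMap.inr R _ _
  refine ⟨LinearMap.codRestrict _ (φ.symm.toLinearMap ∘ₗ h ∘ₗ j) ?_, ?_⟩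
  · intro p
    rw [LinearMap.mem_ker]
    refine (hφ' _).trans ?_
    have : f (h (j p)) = ft (j p) := LinearMap.congr_fun hh _
    refine this.trans ?_
    exact map_zero f
  · intro a
    ext
    change φ.symm (h (j a)) = _
    rw [LinearEquiv.symm_apply_eq]
    change h (j a) = h (ι _)
    congr 1
    refine ((Submodule.Quotient.eq S).mpr ?_)
    refine ⟨-a, ?_⟩
    ext <;> simp

theorem extProp_ext {R : Type u} [CommRing R] {𝒳 : Set (ModuleCat.{u} R)}
    {X K : Type u} [AddCommGroup X] [Module R X] [AddCommGroup K] [Module R K]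
    (g : X →ₗ[R] K) (hg : Function.Surjective g)
    (hL : ExtProp R 𝒳 (LinearMap.ker g)) (hK : ExtProp R 𝒳 K) : ExtProp R 𝒳 X := by
  intro W P hW hP1 hP2 π hπ α
  obtain ⟨β, hβ⟩ := hK W P hW hP1 hP2 π hπ (g ∘ₗ α)
  obtain ⟨γ, hγ⟩ := Module.projective_lifting_property g β hg
  obtain ⟨δ, hδ⟩ := hL W P hW hP1 hP2 π hπ
    (LinearMap.codRestrict _ (α - γ ∘ₗ (LinearMap.ker π).subtype) (by
      intro a
      have h1 := hβ a
      have h2 := LinearMap.congr_fun hγ (a : ↥P)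
      simp at h1 h2
      simp [h1, h2]))
  refine ⟨γ + (LinearMap.ker g).subtype ∘ₗ δ, fun a => ?_⟩
  have := congrArg Subtype.val (hδ a)
  simp only [LinearMap.add_apply, LinearMap.comp_apply, Submodule.subtype_apply, this]
  exact add_sub_cancel _ _

theorem ext_subsingleton_of_extProp {R : Type u} [CommRing R]
    {𝒳 : Set (ModuleCat.{u} R)} (h𝒳 : IsResolving R 𝒳) (Y : ModuleCat.{u} R)
    (hY : ExtProp R 𝒳 Y) (n : ℕ) : ∀ X ∈ 𝒳, ∀ x : Abelian.Ext X Y (n + 1), x = 0 := by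
  induction n with
  | zero =>
    intro X hX x
    have := h𝒳.finite X hX
    obtain ⟨m, π, hπ⟩ := Module.Finite.exists_fin' R X
    let π' : (ULift.{u} (Fin m) → R) →ₗ[R] X := π ∘ₗ (LinearEquiv.funCongrLeft R R Equiv.ulift.symm).toLinearMap
    have hπ' : Function.Surjective π' := hπ.comp (LinearEquiv.surjective _)
    have hS := LinearMap.shortExact_shortComplexKer hπ'
    have : Projective π'.shortComplexKer.X₂ :=
      inferInstanceAs (Projective (ModuleCat.of R (ULift.{u} (Fin m) → R)))
    obtain ⟨y, rfl⟩ := Abelian.Ext.contravariant_sequence_exact₃ hS Y x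
      (Abelian.Ext.eq_zero_of_projective _) (add_comm 1 0)
    obtain ⟨α, rfl⟩ := (Abelian.Ext.mk₀_bijective _ _).2 y
    obtain ⟨β, hβ⟩ := hY X (ModuleCat.of R (ULift.{u} (Fin m) → R)) hX
      inferInstance inferInstance π' hπ' α.hom
    have : α = π'.shortComplexKer.f ≫ ModuleCat.ofHom β := by
      ext a
      exact (hβ a).symm
    rw [this, ← Abelian.Ext.mk₀_comp_mk₀]
    exact hS.extClass_comp_assoc _
  | succ n ih =>
    intro X hX x
    have := h𝒳.finite X hX
    obtain ⟨m, π, hπ⟩ := Module.Finite.exists_fin' R X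
    let π' : (ULift.{u} (Fin m) → R) →ₗ[R] X := π ∘ₗ (LinearEquiv.funCongrLeft R R Equiv.ulift.symm).toLinearMap
    have hπ' : Function.Surjective π' := hπ.comp (LinearEquiv.surjective _)
    have hS := LinearMap.shortExact_shortComplexKer hπ'
    have : Projective π'.shortComplexKer.X₂ :=
      inferInstanceAs (Projective (ModuleCat.of R (ULift.{u} (Fin m) → R)))
    obtain ⟨y, rfl⟩ := Abelian.Ext.contravariant_sequence_exact₃ hS Y x
      (Abelian.Ext.eq_zero_of_projective _) (add_comm 1 (n + 1))
    have hK : ModuleCat.of R (LinearMap.ker π') ∈ 𝒳 := by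
      refine h𝒳.kerClosed _ (ModuleCat.of R (ULift.{u} (Fin m) → R)) X (LinearMap.ker π').subtype π'
        ⟨Submodule.injective_subtype _, LinearMap.exact_subtype_ker_map π', hπ'⟩ ?_ hX
      exact h𝒳.freeMem _ inferInstance inferInstance
    rw [ih _ hK y]
    simp

theorem extVanish_of_ext {R : Type u} [CommRing R] (X Y : ModuleCat.{u} R) (n : ℕ)
    (h : ∀ x : Abelian.Ext X Y (n + 1), x = 0) : ExtVanish R (n + 1) X Y := by
  let P := projectiveResolution X
  have : Limits.IsZero (ExtMod R (n + 1) X Y) := by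
    refine Limits.IsZero.of_iso ?_ (P.isoExt (n + 1) Y)
    rw [← HomologicalComplex.exactAt_iff_isZero_homology,
      HomologicalComplex.exactAt_iff' _ n (n + 1) (n + 2) (by simp) (by simp),
      ShortComplex.moduleCat_exact_iff]
    intro (x : P.complex.X (n + 1) ⟶ Y) hx
    have hx' : P.complex.d (n + 2) (n + 1) ≫ x = 0 := hx
    obtain ⟨g, hg⟩ := (P.extMk_eq_zero_iff x (n + 2) rfl hx' n rfl).mp (h _)
    exact ⟨g, hg⟩
  exact ModuleCat.subsingleton_of_isZero this

theorem mem_xPerp {R : Type u} [CommRing R]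
    {𝒳 : Set (ModuleCat.{u} R)} (h𝒳 : IsResolving R 𝒳) (Y : ModuleCat.{u} R)
    (hY : ExtProp R 𝒳 Y) (hfin : Module.Finite R Y) : Y ∈ XPerp R 𝒳 := by
  refine ⟨hfin, fun X hX i hi => ?_⟩
  obtain ⟨n, rfl⟩ := Nat.exists_eq_succ_of_ne_zero hi.ne'
  exact extVanish_of_ext X Y n (ext_subsingleton_of_extProp h𝒳 Y hY n X hX)

theorem approx_restrict {R : Type u} [CommRing R] {𝒳 : Set (ModuleCat.{u} R)}
    (h𝒳 : IsResolving R 𝒳) {X M : ModuleCat.{u} R} (f : ↥X →ₗ[R] ↥M) (hf : IsRightApprox R 𝒳 f)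
    (N X' : Submodule R X) (hc : IsCompl N X') (hN : N ≤ LinearMap.ker f) :
    ∃ p : ↥X →ₗ[R] X', (∀ x, f (p x) = f x) ∧ (∀ x : X', p x = x) ∧
      IsRightApprox R 𝒳 (X := ModuleCat.of R X') (f ∘ₗ X'.subtype) := by
  have hp : ∀ x, f (X'.projectionOnto N hc.symm x) = f x := fun x => by
    have h1 : x - X'.projectionOnto N hc.symm x ∈ N := by
      rw [← Submodule.projectionOnto_apply_eq_zero_iff hc.symm, map_sub,
        Submodule.projectionOnto_apply_left, sub_self]
    have h2 := hN h1
    rw [LinearMap.mem_ker, map_sub, sub_eq_zero] at h2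
    exact h2.symm
  refine ⟨X'.projectionOnto N hc.symm, hp,
    fun x => Submodule.projectionOnto_apply_left hc.symm x, ?_, ?_⟩
  · refine h𝒳.summandClosed (ModuleCat.of R X') (ModuleCat.of R N) ?_
    exact h𝒳.isoClosed hf.1 (Submodule.prodEquivOfIsCompl X' N hc.symm).symm
  · intro W hW g
    obtain ⟨h, rfl⟩ := hf.2 W hW g
    refine ⟨X'.projectionOnto N hc.symm ∘ₗ h, ?_⟩
    ext w
    exact hp _

theorem approx_surj {R : Type u} [CommRing R] {𝒳 : Set (ModuleCat.{u} R)}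
    (h𝒳 : IsResolving R 𝒳) {X M : ModuleCat.{u} R} (f : ↥X →ₗ[R] ↥M) (hf : IsRightApprox R 𝒳 f) :
    Function.Surjective f := by
  intro m
  obtain ⟨h, hh⟩ := hf.2 (ModuleCat.of R R)
    (h𝒳.freeMem _ inferInstance inferInstance) (LinearMap.toSpanSingleton R M m)
  refine ⟨h (1 : R), ?_⟩
  have := LinearMap.congr_fun hh (1 : R)
  simpa using! this

/-- Over a henselian Gorenstein local ring, every `C ∈ 𝒞(𝒳)` admits an
exact sequence `X₁ → X₀ → C → 0` with `X₀ ∈ 𝒳`, `X₁ ∈ 𝒳 ∩ 𝒳^⊥`, which stays exact after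
applying `Hom_R(W, -)` for every `W ∈ 𝒳`. -/
theorem stmt9 (R : Type u) [CommRing R] [IsNoetherianRing R] [IsLocalRing R]
    [HenselianLocalRing R] (hG : IsGorensteinLocalRing R)
    (𝒳 : Set (ModuleCat.{u} R)) (h𝒳 : IsResolving R 𝒳)
    (C : ModuleCat.{u} R) (hCfg : Module.Finite R C) (hC : MemCC R 𝒳 C) :
    ∃ (X₀ X₁ : ModuleCat.{u} R) (g : ↥X₁ →ₗ[R] ↥X₀) (f : ↥X₀ →ₗ[R] ↥C),
      X₀ ∈ 𝒳 ∧ X₁ ∈ 𝒳 ∧ X₁ ∈ XPerp R 𝒳 ∧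
      Function.Exact g f ∧ Function.Surjective f ∧
      ∀ W ∈ 𝒳, Function.Surjective (fun h : ↥W →ₗ[R] ↥X₀ => f ∘ₗ h) ∧
        Function.Exact (fun h : ↥W →ₗ[R] ↥X₁ => g ∘ₗ h)
          (fun h : ↥W →ₗ[R] ↥X₀ => f ∘ₗ h) := by
  obtain ⟨X₀, X₁, g, f, hX₀, hX₁, hW⟩ := hC
  have := h𝒳.finite X₀ hX₀
  have := h𝒳.finite X₁ hX₁
  have hf : IsRightApprox R 𝒳 f := ⟨hX₀, fun W hw k => (hW W hw).1 k⟩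
  obtain ⟨N, X', hc, hN, hmin⟩ := exists_min f
  obtain ⟨p, hp1, hp2, hf'⟩ := approx_restrict h𝒳 f hf N X' hc hN
  have hfg : ∀ x, f (g x) = 0 := fun x =>
    LinearMap.congr_fun (((hW X₁ hX₁).2 g).mpr ⟨LinearMap.id, rfl⟩) x
  let f' : X' →ₗ[R] ↥C := f ∘ₗ X'.subtype
  let K : ModuleCat.{u} R := ModuleCat.of R (LinearMap.ker f')
  let g' : ↥X₁ →ₗ[R] ↥K := LinearMap.codRestrict (LinearMap.ker f') (p ∘ₗ g) (fun x => by
    rw [LinearMap.mem_ker]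
    exact (hp1 (g x)).trans (hfg x))
  have hg' : IsRightApprox R 𝒳 g' := by
    refine ⟨hX₁, fun W hw k => ?_⟩
    let k' : ↥W →ₗ[R] ↥X₀ := X'.subtype ∘ₗ (LinearMap.ker f').subtype ∘ₗ k
    have hk' : f ∘ₗ k' = 0 := by
      ext w
      exact (k w).2
    obtain ⟨h, hh⟩ := ((hW W hw).2 k').mp hk'
    refine ⟨h, ?_⟩
    ext w
    have h1 : g (h w) = k' w := LinearMap.congr_fun hh w
    have h2 : p (g (h w)) = p (k' w) := congrArg p h1
    have h3 : p (k' w) = (k w).1 := hp2 _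
    exact congrArg Subtype.val (h2.trans h3)
  obtain ⟨N₁, X₁', hc₁, hN₁, hmin₁⟩ := exists_min g'
  obtain ⟨p₁, -, -, hg''⟩ := approx_restrict h𝒳 g' hg' N₁ X₁' hc₁ hN₁
  have hsurj := approx_surj h𝒳 _ hg''
  have hEP : ExtProp R 𝒳 X₁' := by
    refine extProp_ext (g' ∘ₗ X₁'.subtype) hsurj ?_ ?_
    · exact extProp_ker h𝒳 (X := ModuleCat.of R X₁') (g' ∘ₗ X₁'.subtype) hg'' hmin₁
    · exact extProp_ker h𝒳 (X := ModuleCat.of R X') f' hf' hmin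
  refine ⟨ModuleCat.of R X', ModuleCat.of R X₁',
    (LinearMap.ker f').subtype ∘ₗ (g' ∘ₗ X₁'.subtype), f', hf'.1, hg''.1,
    mem_xPerp h𝒳 _ hEP (h𝒳.finite _ hg''.1), ?_, approx_surj h𝒳 (X := ModuleCat.of R X') f' hf', ?_⟩
  · intro x
    constructor
    · intro hx
      obtain ⟨y, hy⟩ := hsurj ⟨x, hx⟩
      exact ⟨y, congrArg Subtype.val hy⟩
    · rintro ⟨y, rfl⟩
      exact (g' y.1).2
  · intro W hw
    refine ⟨fun k => hf'.2 W hw k, fun k => ?_⟩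
    constructor
    · intro hk
      obtain ⟨h, hh⟩ := hg''.2 W hw (LinearMap.codRestrict (LinearMap.ker f') k
        (fun w => LinearMap.congr_fun hk w))
      refine ⟨h, ?_⟩
      ext w
      exact congrArg (fun z => z.1.1) (LinearMap.congr_fun hh w)
    · rintro ⟨y, rfl⟩
      ext w
      exact (g' (y w).1).2
end

section
/- Let R be a henselian Gorenstein Noetherian local ring and 𝒳 a resolving subcategory of the category of finitely generated R-modules. Then the class 𝒞(𝒳) is closed under direct summands and under extensions: (i) if M ⊕ N ∈ 𝒞(𝒳) then M ∈ 𝒞(𝒳) and N ∈ 𝒞(𝒳); (ii) if 0 → A → B → C → 0 is a short exact sequence of finitely generated R-modules with A, C ∈ 𝒞(𝒳), then B ∈ 𝒞(𝒳). -/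
open CategoryTheory IsLocalRing

universe u

section Helpers

open Polynomial in
lemma hens_etale {R : Type u} [CommRing R] [HenselianLocalRing R] {S : Type u} [CommRing S]
    [Algebra R S] [Algebra.Etale R S] (φ : S →ₐ[R] ResidueField R) :
    ∃ ψ : S →ₐ[R] R, ∀ s, residue R (ψ s) = φ s := by
  let Q : Ideal S := RingHom.ker φ.toRingHom
  have hQ : Q.IsPrime := RingHom.ker_isPrime _
  obtain ⟨f, hf, hst⟩ := Algebra.IsEtaleAt.exists_isStandardEtale (R := R) Q
  have hfu : IsUnit (φ f) := by
    rw [isUnit_iff_ne_zero]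
    exact hf
  let φ' : Localization.Away f →ₐ[R] ResidueField R := IsLocalization.Away.liftAlgHom (f := φ) f hfu
  have hφ' : ∀ s, φ' (algebraMap S _ s) = φ s := fun s => by
    simp [φ']
  let P : StandardEtalePresentation R (Localization.Away f) :=
    Algebra.IsStandardEtale.nonempty_standardEtalePresentation.some
  have hm := P.hasMap.map φ'
  have h2 := StandardEtalePair.HasMap.isUnit_derivative_f (P := P.P) hm
  have hT := ((HenselianLocalRing.TFAE R).out 0 1 rfl rfl).mp inferInstance
  obtain ⟨a, ha, ha'⟩ := hT P.f P.monic_f (φ' P.x) hm.1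
    h2.ne_zero
  have hra : ∀ q : R[X], residue R (q.eval a) = aeval (φ' P.x) q := by
    intro q
    rw [← ha', aeval_def, ResidueField.algebraMap_eq, eval₂_at_apply]
  have hma : P.P.HasMap a := by
    refine ⟨by simpa [IsRoot] using ha, ?_⟩
    have : IsUnit (residue R (P.g.eval a)) := by rw [hra]; exact hm.2
    have := (isUnit_map_iff (residue R) _).mp this
    simpa using this
  let ψ' : Localization.Away f →ₐ[R] R := (P.lift a hma).comp P.equivRing.toAlgHom
  have key : (IsScalarTower.toAlgHom R R (ResidueField R)).comp ψ' = φ' := by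
    apply P.hom_ext
    simp [ψ', ha']
  refine ⟨ψ'.comp (IsScalarTower.toAlgHom R S _), fun s => ?_⟩
  rw [← hφ' s, ← key]
  rfl

open Polynomial in
lemma hens_factor_s11 {R : Type u} [CommRing R] [HenselianLocalRing R] (p : R[X]) (hp : p.Monic)
    (f g : (ResidueField R)[X]) (hf : f.Monic) (hg : g.Monic)
    (h : f * g = p.map (residue R)) (hc : IsCoprime f g) :
    ∃ f' g' : R[X], f' * g' = p ∧ IsCoprime f' g' ∧ f'.map (residue R) = f ∧
      g'.map (residue R) = g := by
  have hn : p.natDegree = f.natDegree + g.natDegree := by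
    rw [← hf.natDegree_mul hg, h, hp.natDegree_map]
  let p' : MonicDegreeEq R p.natDegree := .mk p hp rfl
  let e := UniversalCoprimeFactorizationRing.homEquiv (ResidueField R) f.natDegree g.natDegree hn p'
  let φ := e.symm ⟨(.mk f hf rfl, .mk g hg rfl), h, hc⟩
  obtain ⟨ψ, hψ⟩ := hens_etale φ
  have hψ' : (IsScalarTower.toAlgHom R R (ResidueField R)).comp ψ = φ := by
    ext s; exact hψ _
  let q := UniversalCoprimeFactorizationRing.homEquiv R f.natDegree g.natDegree hn p' ψ
  have h1 := UniversalCoprimeFactorizationRing.homEquiv_comp_fst (R := R) (S := R)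
    f.natDegree g.natDegree hn p' ψ (IsScalarTower.toAlgHom R R (ResidueField R))
  have h2 := UniversalCoprimeFactorizationRing.homEquiv_comp_snd (R := R) (S := R)
    f.natDegree g.natDegree hn p' ψ (IsScalarTower.toAlgHom R R (ResidueField R))
  have he : e φ = ⟨(.mk f hf rfl, .mk g hg rfl), h, hc⟩ := e.apply_symm_apply _
  rw [hψ'] at h1 h2
  change (e φ).1.1 = _ at h1
  change (e φ).1.2 = _ at h2
  rw [he] at h1 h2
  refine ⟨q.1.1.1, q.1.2.1, ?_, q.2.2, ?_, ?_⟩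
  · have := q.2.1
    simp only [Algebra.algebraMap_self, Polynomial.map_id] at this
    exact this
  · exact congrArg Subtype.val h1.symm
  · exact congrArg Subtype.val h2.symm

open Polynomial in
lemma fitting {R : Type u} [CommRing R] [HenselianLocalRing R] {M A : Type u} [AddCommGroup M]
    [Module R M] [AddCommGroup A] [Module R A] [Module.Finite R M] (ρ : M →ₗ[R] A)
    (φ : M →ₗ[R] M) (hφ : ρ ∘ₗ φ = ρ) :
    ∃ e : M →ₗ[R] M, e ∘ₗ e = e ∧ ρ ∘ₗ e = ρ ∧ (e = LinearMap.id → Function.Bijective φ) := by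
  obtain ⟨p, hp, hp0⟩ : ∃ p : R[X], p.Monic ∧ aeval φ p = 0 := 
    Algebra.IsIntegral.isIntegral (R := R) (A := Module.End R M) φ
  have hpne : p.map (residue R) ≠ 0 := (hp.map _).ne_zero
  obtain ⟨q, hq, hq0⟩ := exists_eq_pow_rootMultiplicity_mul_and_not_dvd (p.map (residue R)) hpne 0
  set k := rootMultiplicity 0 (p.map (residue R))
  simp only [map_zero, sub_zero] at hq hq0
  have hqm : q.Monic := by
    have := hp.map (residue R)
    rw [hq] at this
    exact (monic_X_pow k).of_mul_monic_left this
  have hc : IsCoprime ((X : (ResidueField R)[X]) ^ k) q :=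
    IsCoprime.pow_left ((irreducible_X.coprime_iff_not_dvd).mpr hq0)
  obtain ⟨f, g, hfg, ⟨a, b, hab⟩, hf, hg⟩ := hens_factor_s11 p hp _ q (monic_X_pow k) hqm hq.symm hc
  have hf1 : IsUnit (f.eval 1) := by
    apply (isUnit_map_iff (residue R) _).mp
    have : residue R (f.eval 1) = 1 := by
      have := congrArg (Polynomial.eval 1) hf
      simpa [eval_map, eval₂_hom] using this
    rw [this]; exact isUnit_one
  have hg0 : IsUnit (g.eval 0) := by
    apply (isUnit_map_iff (residue R) _).mp
    have : residue R (g.eval 0) = q.eval 0 := by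
      rw [← hg, ← map_zero (residue R), Polynomial.eval_map, eval₂_hom]
    rw [this, isUnit_iff_ne_zero]
    rw [X_dvd_iff] at hq0
    rwa [← coeff_zero_eq_eval_zero]
  have hE : aeval φ (f * g) = 0 := by rw [hfg, hp0]
  have hab' : aeval φ (a * f) + aeval φ (b * g) = 1 := by
    rw [← map_add, hab, map_one]
  have hz : aeval φ (a * f) * aeval φ (b * g) = 0 := by
    rw [← map_mul, show a * f * (b * g) = a * b * (f * g) by ring, map_mul, hE, mul_zero]
  refine ⟨aeval φ (a * f), ?_, ?_, ?_⟩
  · change aeval φ (a * f) * aeval φ (a * f) = _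
    have := congrArg (fun t => aeval φ (a * f) * t) hab'
    simp only [mul_add, hz, add_zero, mul_one] at this
    exact this
  · obtain ⟨h, hh⟩ := X_sub_C_dvd_sub_C_eval (a := (1 : R)) (p := f)
    have h1 : f.eval 1 • aeval φ (b * g) = (1 - φ) * aeval φ (h * (b * g)) := by
      have : C (f.eval 1) * (b * g) = (1 - X) * (h * (b * g)) + b * (f * g) := by
        have : f = (X - C 1) * h + C (f.eval 1) := by rw [← hh]; ring
        conv_rhs => rw [this]
        simp only [map_one]
        ring
      have := congrArg (aeval φ) this
      rw [map_add, map_mul _ b, hE, mul_zero, add_zero, map_mul, map_mul] at this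
      rw [aeval_C] at this
      simpa [Algebra.smul_def] using this
    have h2 : ρ ∘ₗ (1 - φ) = 0 := by
      rw [LinearMap.comp_sub, hφ]; ext; simp
    have h3 : f.eval 1 • (ρ ∘ₗ aeval φ (b * g)) = 0 := by
      rw [← LinearMap.comp_smul, h1]
      change (ρ ∘ₗ (1 - φ)) ∘ₗ _ = 0
      rw [h2, LinearMap.zero_comp]
    have h4 : ρ ∘ₗ aeval φ (b * g) = 0 := by
      obtain ⟨u, hu⟩ := hf1
      rw [← hu] at h3
      have := congrArg (fun t => (↑u⁻¹ : R) • t) h3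
      simpa [smul_smul] using this
    have := congrArg (fun t => ρ ∘ₗ t) hab'
    simp only [LinearMap.comp_add, h4, add_zero] at this
    rw [this]; ext; simp
  · intro he
    have hfu : aeval φ a * aeval φ f = 1 := by rw [← map_mul]; exact he
    have hg' : aeval φ g = 0 := by
      rw [map_mul] at hE
      calc aeval φ g = (aeval φ a * aeval φ f) * aeval φ g := by rw [hfu, one_mul]
        _ = 0 := by rw [mul_assoc, hE, mul_zero]
    obtain ⟨h, hh⟩ := X_sub_C_dvd_sub_C_eval (a := (0 : R)) (p := g)
    have h1 := congrArg (aeval φ) hh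
    rw [map_sub, hg', aeval_C, map_mul] at h1
    simp only [map_zero, sub_zero, aeval_X] at h1
    have h2 : aeval φ h * φ = φ * aeval φ h := by
      have := congrArg (aeval φ) (mul_comm h X)
      simpa using this
    obtain ⟨u, hu⟩ := hg0
    have hu1 : φ * aeval φ h = - ((u : R) • 1) := by
      rw [← h1, hu, Algebra.algebraMap_eq_smul_one]; simp
    have : IsUnit φ := by
      rw [isUnit_iff_exists]
      refine ⟨-((↑u⁻¹ : R) • aeval φ h), ?_, ?_⟩
      · rw [mul_neg, mul_smul_comm, hu1]; simp [smul_smul]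
      · rw [neg_mul, smul_mul_assoc, h2, hu1]; simp [smul_smul]
    exact (Module.End.isUnit_iff φ).mp this

end Helpers
section Helpers2

variable {R : Type u} [CommRing R]

def MemX (𝒳 : Set (ModuleCat.{u} R)) (M : Type u) [AddCommGroup M] [Module R M] : Prop :=
  ModuleCat.of R M ∈ 𝒳

structure Appr (𝒳 : Set (ModuleCat.{u} R)) {X M : Type u} [AddCommGroup X] [Module R X]
    [AddCommGroup M] [Module R M] (f : X →ₗ[R] M) : Prop where
  mem : MemX 𝒳 X
  lift : ∀ (W : Type u) [AddCommGroup W] [Module R W], MemX 𝒳 W → ∀ g : W →ₗ[R] M,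
    ∃ h : W →ₗ[R] X, f ∘ₗ h = g

def MinMap {X M : Type u} [AddCommGroup X] [Module R X]
    [AddCommGroup M] [Module R M] (f : X →ₗ[R] M) : Prop :=
  ∀ φ : X →ₗ[R] X, f ∘ₗ φ = f → Function.Bijective φ

variable {𝒳 : Set (ModuleCat.{u} R)} (h𝒳 : IsResolving R 𝒳)

variable {A B C : Type u} [AddCommGroup A] [Module R A] [AddCommGroup B] [Module R B]
  [AddCommGroup C] [Module R C]

include h𝒳 in
lemma mem_ext' (f : A →ₗ[R] B) (g : B →ₗ[R] C) (h1 : Function.Injective f)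
    (h2 : Function.Exact f g) (h3 : Function.Surjective g) (hA : MemX 𝒳 A) (hC : MemX 𝒳 C) :
    MemX 𝒳 B :=
  h𝒳.extClosed (ModuleCat.of R A) (ModuleCat.of R B) (ModuleCat.of R C) f g ⟨h1, h2, h3⟩ hA hC

include h𝒳 in
lemma mem_ker' (f : A →ₗ[R] B) (g : B →ₗ[R] C) (h1 : Function.Injective f)
    (h2 : Function.Exact f g) (h3 : Function.Surjective g) (hB : MemX 𝒳 B) (hC : MemX 𝒳 C) :
    MemX 𝒳 A :=
  h𝒳.kerClosed (ModuleCat.of R A) (ModuleCat.of R B) (ModuleCat.of R C) f g ⟨h1, h2, h3⟩ hB hC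

include h𝒳 in
lemma mem_prod' (hA : MemX 𝒳 A) (hC : MemX 𝒳 C) : MemX 𝒳 (A × C) :=
  mem_ext' h𝒳 (LinearMap.inl R A C) (LinearMap.snd R A C) LinearMap.inl_injective
    .inl_snd LinearMap.snd_surjective hA hC

include h𝒳 in
lemma appr_surj {f : A →ₗ[R] B} (hf : Appr 𝒳 f) : Function.Surjective f := by
  intro b
  obtain ⟨h, hh⟩ := hf.lift R (h𝒳.freeMem (ModuleCat.of R R) inferInstance inferInstance)
    (LinearMap.toSpanSingleton R B b)
  exact ⟨h 1, by simpa using LinearMap.congr_fun hh 1⟩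

lemma descend {f : A →ₗ[R] B} (hf : Function.Surjective f) (g : A →ₗ[R] C)
    (h : ∀ x, f x = 0 → g x = 0) : ∃ k : B →ₗ[R] C, k ∘ₗ f = g := by
  refine ⟨(LinearMap.ker f).liftQ g h ∘ₗ (f.quotKerEquivOfSurjective hf).symm.toLinearMap, ?_⟩
  ext x
  have : (f.quotKerEquivOfSurjective hf).symm (f x) = Submodule.Quotient.mk x := by
    rw [LinearEquiv.symm_apply_eq]; rfl
  simp only [LinearMap.comp_apply, LinearEquiv.coe_coe, this]
  rfl

lemma factor {i : A →ₗ[R] B} (hi : Function.Injective i) {p : B →ₗ[R] C}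
    (he : Function.Exact i p) {W : Type u} [AddCommGroup W] [Module R W] (m : W →ₗ[R] B)
    (hm : p ∘ₗ m = 0) : ∃ m' : W →ₗ[R] A, i ∘ₗ m' = m := by
  have h : ∀ w, m w ∈ LinearMap.range i := fun w => (he _).mp (LinearMap.congr_fun hm w)
  refine ⟨(LinearEquiv.ofInjective i hi).symm.toLinearMap ∘ₗ m.codRestrict _ h, ?_⟩
  ext w
  have := LinearEquiv.apply_symm_apply (LinearEquiv.ofInjective i hi) (m.codRestrict _ h w)
  exact congrArg Subtype.val this

include h𝒳 in
lemma exists_min_s11 [IsNoetherianRing R] [HenselianLocalRing R] {X : Type u} [AddCommGroup X]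
    [Module R X] (f : X →ₗ[R] A) (hf : Appr 𝒳 f) :
    ∃ (Z : Type u) (_ : AddCommGroup Z) (_ : Module R Z) (ρ : Z →ₗ[R] A) (p : X →ₗ[R] Z)
      (s : Z →ₗ[R] X), p ∘ₗ s = LinearMap.id ∧ ρ ∘ₗ p = f ∧ Appr 𝒳 ρ ∧ MinMap ρ := by
  have : Module.Finite R X := h𝒳.finite _ hf.mem
  let S : Set (Submodule R X) := {K | ∃ (Z : Type u) (_ : AddCommGroup Z) (_ : Module R Z)
    (ρ : Z →ₗ[R] A) (p : X →ₗ[R] Z) (s : Z →ₗ[R] X), p ∘ₗ s = LinearMap.id ∧ ρ ∘ₗ p = f ∧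
    MemX 𝒳 Z ∧ LinearMap.ker p = K}
  have hS : S.Nonempty := ⟨_, X, _, _, f, LinearMap.id, LinearMap.id, rfl, rfl, hf.mem, rfl⟩
  obtain ⟨K, ⟨Z, _, _, ρ, p, s, hps, hρ, hZ, hK⟩, hmax⟩ :=
    set_has_maximal_iff_noetherian.mpr (inferInstance : IsNoetherian R X) S hS
  have hps' : ∀ z, p (s z) = z := fun z => LinearMap.congr_fun hps z
  refine ⟨Z, _, _, ρ, p, s, hps, hρ, ⟨hZ, ?_⟩, ?_⟩
  · intro W _ _ hW g
    obtain ⟨h, hh⟩ := hf.lift W hW g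
    exact ⟨p ∘ₗ h, by rw [← LinearMap.comp_assoc, hρ, hh]⟩
  · intro φ hφ
    have : Module.Finite R Z := h𝒳.finite _ hZ
    obtain ⟨e, he, hρe, hb⟩ := fitting ρ φ hφ
    have he' : ∀ z, e (e z) = e z := fun z => LinearMap.congr_fun he z
    apply hb
    have hr : e.rangeRestrict ∘ₗ (LinearMap.range e).subtype = LinearMap.id := by
      ext ⟨x, y, rfl⟩
      simp [he']
    have hmem : MemX 𝒳 (LinearMap.range e) := by
      let eq : (LinearMap.range e × LinearMap.ker e) ≃ₗ[R] Z :=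
        { toFun := fun x => x.1 + x.2
          map_add' := fun x y => by simp; abel
          map_smul' := fun c x => by simp
          invFun := fun z => (⟨e z, z, rfl⟩, ⟨z - e z, by simp [he']⟩)
          left_inv := by
            rintro ⟨⟨_, y, rfl⟩, ⟨w, hw⟩⟩
            have hw : e w = 0 := hw
            simp [he', hw]
          right_inv := fun z => by simp }
      exact h𝒳.summandClosed (ModuleCat.of R (LinearMap.range e))
        (ModuleCat.of R (LinearMap.ker e)) (h𝒳.isoClosed (M := ModuleCat.of R Z) hZ eq.symm)
    have hin : LinearMap.ker (e.rangeRestrict ∘ₗ p) ∈ S := by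
      refine ⟨LinearMap.range e, _, _, ρ ∘ₗ (LinearMap.range e).subtype, e.rangeRestrict ∘ₗ p,
        s ∘ₗ (LinearMap.range e).subtype, ?_, ?_, hmem, rfl⟩
      · ext x
        simp only [LinearMap.comp_apply, hps']
        exact congrArg Subtype.val (LinearMap.congr_fun hr x)
      · ext x
        have := LinearMap.congr_fun hρe (p x)
        have h2 := LinearMap.congr_fun hρ x
        simp only [LinearMap.comp_apply] at this h2 ⊢
        rw [← h2, ← this]; rfl
    have hle : K ≤ LinearMap.ker (e.rangeRestrict ∘ₗ p) := by
      rw [← hK]; exact LinearMap.ker_le_ker_comp p _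
    have heq : K = LinearMap.ker (e.rangeRestrict ∘ₗ p) := by
      by_contra hne
      exact hmax _ hin (lt_of_le_of_ne hle hne)
    ext z
    have h0 : s (e z - z) ∈ K := by
      rw [heq]
      rw [LinearMap.mem_ker, LinearMap.comp_apply, hps']
      apply Subtype.ext
      change e (e z - z) = 0
      simp [he']
    rw [← hK, LinearMap.mem_ker, hps', sub_eq_zero] at h0
    exact h0

include h𝒳 in
lemma ext_lift {XA XC E : Type u} [AddCommGroup XA] [Module R XA] [AddCommGroup XC] [Module R XC]
    [AddCommGroup E] [Module R E]
    (i : A →ₗ[R] B) (p : B →ₗ[R] C) (hi : Function.Injective i) (hip : Function.Exact i p)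
    (α : XA →ₗ[R] A) (hα : Appr 𝒳 α) (hm : MinMap α)
    (γ : XC →ₗ[R] C) (hγ : Appr 𝒳 γ) (j : XA →ₗ[R] E) (q : E →ₗ[R] XC)
    (ε : E →ₗ[R] B) (hj : Function.Injective j) (hjq : Function.Exact j q)
    (hq : Function.Surjective q) (hεj : ∀ x, ε (j x) = i (α x)) (hpε : ∀ e, p (ε e) = γ (q e))
    (W : Type u) [AddCommGroup W] [Module R W] (hW : MemX 𝒳 W) (g : W →ₗ[R] B) :
    ∃ h : W →ₗ[R] E, ε ∘ₗ h = g := by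
  obtain ⟨θ, hθ⟩ := hγ.lift W hW (p ∘ₗ g)
  have hθ' : ∀ w, γ (θ w) = p (g w) := fun w => LinearMap.congr_fun hθ w
  let V : Submodule R (W × E) :=
    LinearMap.ker (θ ∘ₗ LinearMap.fst R W E - q ∘ₗ LinearMap.snd R W E)
  have hV : ∀ v : W × E, v ∈ V ↔ θ v.1 = q v.2 := fun v => by
    simp [V, sub_eq_zero]
  let a : XA →ₗ[R] V := LinearMap.codRestrict V (LinearMap.inr R W E ∘ₗ j) (fun x => by
    rw [hV]; simp [hjq.apply_apply_eq_zero])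
  let b : V →ₗ[R] W := LinearMap.fst R W E ∘ₗ V.subtype
  let c : V →ₗ[R] E := LinearMap.snd R W E ∘ₗ V.subtype
  have hca : ∀ x, c (a x) = j x := fun x => rfl
  have hba : ∀ x, b (a x) = 0 := fun x => rfl
  have hbc : ∀ v, θ (b v) = q (c v) := fun v => (hV _).mp v.2
  have ha : Function.Injective a := fun x y h => hj (by rw [← hca, ← hca, h])
  have hab : Function.Exact a b := by
    intro v
    constructor
    · intro hv
      have h1 := hbc v
      rw [hv, map_zero] at h1
      obtain ⟨x, hx⟩ := (hjq _).mp h1.symm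
      refine ⟨x, Subtype.ext (Prod.ext hv.symm hx)⟩
    · rintro ⟨x, rfl⟩
      exact hba x
  have hb : Function.Surjective b := fun w => by
    obtain ⟨e, he⟩ := hq (θ w)
    exact ⟨⟨(w, e), (hV _).mpr he.symm⟩, rfl⟩
  have hVX : MemX 𝒳 V := mem_ext' h𝒳 a b ha hab hb hα.mem hW
  obtain ⟨m, hm1⟩ := factor hi hip (ε ∘ₗ c - g ∘ₗ b) (by
    ext v
    simp [hpε, ← hbc, hθ'])
  obtain ⟨μ, hμ⟩ := hα.lift V hVX m
  have hμ' : ∀ v, i (α (μ v)) = ε (c v) - g (b v) := fun v => by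
    have h1 := LinearMap.congr_fun hμ v
    have h2 := LinearMap.congr_fun hm1 v
    simp only [LinearMap.comp_apply, LinearMap.sub_apply] at h1 h2
    rw [h1, h2]
  have hφ : α ∘ₗ (μ ∘ₗ a) = α := by
    ext x
    apply hi
    simp only [LinearMap.comp_apply]
    rw [hμ', hca, hba, map_zero, sub_zero, hεj]
  let Φ := LinearEquiv.ofBijective (μ ∘ₗ a) (hm _ hφ)
  have hΦ : ∀ x, α (Φ.symm x) = α x := fun x => by
    have h1 := LinearMap.congr_fun hφ (Φ.symm x)
    rw [← h1]
    exact congrArg α (Φ.apply_symm_apply x)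
  obtain ⟨k, hk⟩ := descend hb (c - j ∘ₗ Φ.symm.toLinearMap ∘ₗ μ) (by
    intro v hv
    obtain ⟨x, rfl⟩ := (hab v).mp hv
    have : Φ.symm (μ (a x)) = x := Φ.symm_apply_apply x
    simp [hca, this])
  refine ⟨k, ?_⟩
  ext w
  obtain ⟨v, rfl⟩ := hb w
  have := LinearMap.congr_fun hk v
  simp only [LinearMap.comp_apply, LinearMap.sub_apply, LinearEquiv.coe_coe] at this ⊢
  rw [this, map_sub, hεj, hΦ, hμ']
  abel

include h𝒳 in
lemma ext_appr {XA XC : Type u} [AddCommGroup XA] [Module R XA] [AddCommGroup XC] [Module R XC]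
    (i : A →ₗ[R] B) (p : B →ₗ[R] C) (hi : Function.Injective i) (hip : Function.Exact i p)
    (hp : Function.Surjective p) (α : XA →ₗ[R] A) (hα : Appr 𝒳 α) (hm : MinMap α)
    (γ : XC →ₗ[R] C) (hγ : Appr 𝒳 γ) :
    ∃ (E : Type u) (_ : AddCommGroup E) (_ : Module R E) (j : XA →ₗ[R] E) (q : E →ₗ[R] XC)
      (ε : E →ₗ[R] B), Function.Injective j ∧ Function.Exact j q ∧ Function.Surjective q ∧
      ε ∘ₗ j = i ∘ₗ α ∧ p ∘ₗ ε = γ ∘ₗ q ∧ Appr 𝒳 ε := by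
  have : Module.Finite R XC := h𝒳.finite _ hγ.mem
  obtain ⟨n, t, ht⟩ := Module.Finite.exists_fin' R XC
  obtain ⟨l, hl⟩ := Module.projective_lifting_property p (γ ∘ₗ t) hp
  have hl' : ∀ y, p (l y) = γ (t y) := fun y => LinearMap.congr_fun hl y
  have hΩ : MemX 𝒳 (LinearMap.ker t) := mem_ker' h𝒳 (LinearMap.ker t).subtype t
    (Submodule.injective_subtype _) (LinearMap.exact_subtype_ker_map t) ht
    (h𝒳.freeMem (ModuleCat.of R (Fin n → R)) inferInstance inferInstance) hγ.mem
  obtain ⟨m', hm'⟩ := factor hi hip (l ∘ₗ (LinearMap.ker t).subtype) (by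
    ext ⟨y, hy⟩
    have hy : t y = 0 := hy
    simp [hl', hy])
  obtain ⟨κ, hκ⟩ := hα.lift _ hΩ m'
  have hiκ : ∀ ω : LinearMap.ker t, i (α (κ ω)) = l ω := fun ω => by
    have h1 := LinearMap.congr_fun hκ ω
    have h2 := LinearMap.congr_fun hm' ω
    simp only [LinearMap.comp_apply] at h1 h2
    rw [h1, h2]; rfl
  let d : LinearMap.ker t →ₗ[R] XA × (Fin n → R) := κ.prod (-(LinearMap.ker t).subtype)
  let N := LinearMap.range d
  let j : XA →ₗ[R] (XA × (Fin n → R)) ⧸ N := N.mkQ ∘ₗ LinearMap.inl R _ _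
  let q : ((XA × (Fin n → R)) ⧸ N) →ₗ[R] XC := N.liftQ (t ∘ₗ LinearMap.snd R _ _) (by
    rintro _ ⟨⟨y, hy⟩, rfl⟩
    have hy : t y = 0 := hy
    simp [d, hy])
  let ε : ((XA × (Fin n → R)) ⧸ N) →ₗ[R] B := N.liftQ ((i ∘ₗ α).coprod l) (by
    rintro _ ⟨ω, rfl⟩
    simp [d, hiκ])
  have hj : Function.Injective j := by
    rw [← LinearMap.ker_eq_bot, LinearMap.ker_eq_bot']
    intro x hx
    have hx : (x, (0 : Fin n → R)) ∈ N := by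
      simpa [j] using hx
    obtain ⟨ω, hω⟩ := hx
    have h1 : κ ω = x := congrArg Prod.fst hω
    have h2 : -(ω : Fin n → R) = 0 := congrArg Prod.snd hω
    have h3 : ω = 0 := Subtype.ext (neg_eq_zero.mp h2)
    rw [← h1, h3, map_zero]
  have hjq : Function.Exact j q := by
    intro e
    constructor
    · intro he
      obtain ⟨⟨x, y⟩, rfl⟩ := N.mkQ_surjective e
      have he : t y = 0 := he
      refine ⟨x + κ ⟨y, he⟩, ?_⟩
      change N.mkQ _ = N.mkQ _
      rw [← sub_eq_zero, ← map_sub, Submodule.mkQ_apply, Submodule.Quotient.mk_eq_zero]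
      refine ⟨⟨y, he⟩, ?_⟩
      simp [d]
    · rintro ⟨x, rfl⟩
      change t 0 = 0
      simp
  have hq : Function.Surjective q := fun x => by
    obtain ⟨y, rfl⟩ := ht x
    exact ⟨N.mkQ (0, y), rfl⟩
  have hεj : ∀ x, ε (j x) = i (α x) := fun x => by
    change i (α x) + l 0 = _
    simp
  have hpε : ∀ e, p (ε e) = γ (q e) := fun e => by
    obtain ⟨⟨x, y⟩, rfl⟩ := N.mkQ_surjective e
    change p (i (α x) + l y) = γ (t y)
    rw [map_add, hip.apply_apply_eq_zero, zero_add, hl']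
  have hE : MemX 𝒳 ((XA × (Fin n → R)) ⧸ N) := mem_ext' h𝒳 j q hj hjq hq hα.mem hγ.mem
  refine ⟨_, _, _, j, q, ε, hj, hjq, hq, LinearMap.ext hεj, LinearMap.ext hpε, hE, ?_⟩
  exact ext_lift h𝒳 i p hi hip α hα hm γ hγ j q ε hj hjq hq hεj hpε

lemma memCC_iff {M : ModuleCat.{u} R} : MemCC R 𝒳 M ↔
    ∃ (X : Type u) (_ : AddCommGroup X) (_ : Module R X) (α : X →ₗ[R] M) (_ : Appr 𝒳 α)
      (Y : Type u) (_ : AddCommGroup Y) (_ : Module R Y) (β : Y →ₗ[R] LinearMap.ker α),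
      Appr 𝒳 β := by
  constructor
  · rintro ⟨X₀, X₁, g, f, h0, h1, h⟩
    have hgf : f ∘ₗ g = 0 := ((h X₁ h1).2 g).mpr ⟨LinearMap.id, rfl⟩
    refine ⟨X₀, _, _, f, ⟨h0, fun W _ _ hW => (h (ModuleCat.of R W) hW).1⟩, X₁, _, _,
      LinearMap.codRestrict _ g (fun x => LinearMap.congr_fun hgf x), h1, fun W _ _ hW k => ?_⟩
    obtain ⟨k', hk'⟩ := ((h (ModuleCat.of R W) hW).2 ((LinearMap.ker f).subtype ∘ₗ k)).mp (by
      ext w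
      exact (k w).2)
    refine ⟨k', ?_⟩
    ext w
    exact LinearMap.congr_fun hk' w
  · rintro ⟨X, _, _, α, hα, Y, _, _, β, hβ⟩
    refine ⟨ModuleCat.of R X, ModuleCat.of R Y, (LinearMap.ker α).subtype ∘ₗ β, α, hα.mem, hβ.mem,
      fun W hW => ⟨hα.lift W hW, fun k => ⟨fun hk => ?_, ?_⟩⟩⟩
    · have hk : α ∘ₗ k = 0 := hk
      obtain ⟨k', hk'⟩ := hβ.lift W hW (LinearMap.codRestrict _ k
        (fun x => LinearMap.congr_fun hk x))
      refine ⟨k', ?_⟩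
      ext w
      exact congrArg Subtype.val (LinearMap.congr_fun hk' w)
    · rintro ⟨k', rfl⟩
      ext w
      exact (β (k' w)).2

include h𝒳 in
lemma memCC_min [IsNoetherianRing R] [HenselianLocalRing R] {M : ModuleCat.{u} R}
    (hM : MemCC R 𝒳 M) :
    ∃ (X : Type u) (_ : AddCommGroup X) (_ : Module R X) (α : X →ₗ[R] M) (_ : Appr 𝒳 α)
      (_ : MinMap α)
      (Y : Type u) (_ : AddCommGroup Y) (_ : Module R Y) (β : Y →ₗ[R] LinearMap.ker α)
      (_ : Appr 𝒳 β), MinMap β := by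
  obtain ⟨X, _, _, α, hα, Y, _, _, β, hβ⟩ := memCC_iff.mp hM
  obtain ⟨Z, _, _, ρ, p, s, hps, hρ, hρa, hρm⟩ := exists_min_s11 h𝒳 α hα
  have hps' : ∀ z, p (s z) = z := fun z => LinearMap.congr_fun hps z
  have hρ' : ∀ x, ρ (p x) = α x := fun x => LinearMap.congr_fun hρ x
  let p' : LinearMap.ker α →ₗ[R] LinearMap.ker ρ := LinearMap.codRestrict _
    (p ∘ₗ (LinearMap.ker α).subtype) (fun x => by
      rw [LinearMap.mem_ker, LinearMap.comp_apply, hρ']; exact x.2)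
  let s' : LinearMap.ker ρ →ₗ[R] LinearMap.ker α := LinearMap.codRestrict _
    (s ∘ₗ (LinearMap.ker ρ).subtype) (fun x => by
      rw [LinearMap.mem_ker, LinearMap.comp_apply, ← hρ', hps']; exact x.2)
  have hps'' : ∀ z, p' (s' z) = z := fun z => Subtype.ext (hps' _)
  have hβ' : Appr 𝒳 (p' ∘ₗ β) := by
    refine ⟨hβ.mem, fun W _ _ hW g => ?_⟩
    obtain ⟨k, hk⟩ := hβ.lift W hW (s' ∘ₗ g)
    refine ⟨k, ?_⟩
    rw [LinearMap.comp_assoc, hk]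
    ext w
    exact congrArg Subtype.val (hps'' (g w))
  obtain ⟨Y', _, _, β', _, _, _, _, h1, h2⟩ := exists_min_s11 h𝒳 _ hβ'
  exact ⟨Z, _, _, ρ, hρa, hρm, Y', _, _, β', h1, h2⟩

include h𝒳 in
lemma memCC_fst {M N : ModuleCat.{u} R} (f : M →ₗ[R] N) (s : N →ₗ[R] M)
    (hs : ∀ x, f (s x) = x) (h : MemCC R 𝒳 M) : MemCC R 𝒳 N := by
  obtain ⟨X, _, _, α, hα, Y, _, _, β, hβ⟩ := memCC_iff.mp h
  obtain ⟨e, he⟩ := hα.lift X hα.mem (α - s ∘ₗ f ∘ₗ α)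
  have he' : ∀ x, α (e x) = α x - s (f (α x)) := fun x => LinearMap.congr_fun he x
  rw [memCC_iff]
  have hmem : ∀ z : X × Y, (e.coprod ((LinearMap.ker α).subtype ∘ₗ β)) z ∈
      LinearMap.ker (f ∘ₗ α) := by
    rintro ⟨x, y⟩
    have hy : α (β y) = 0 := (β y).2
    simp [he', hy, hs]
  refine ⟨X, _, _, f ∘ₗ α, ⟨hα.mem, fun W _ _ hW g => ?_⟩, X × Y, _, _,
    LinearMap.codRestrict _ (e.coprod ((LinearMap.ker α).subtype ∘ₗ β)) hmem,
    mem_prod' h𝒳 hα.mem hβ.mem, fun W _ _ hW g => ?_⟩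
  · obtain ⟨k, hk⟩ := hα.lift W hW (s ∘ₗ g)
    refine ⟨k, ?_⟩
    rw [LinearMap.comp_assoc, hk]
    ext w
    simp [hs]
  · have hg : ∀ w, f (α (g w)) = 0 := fun w => (g w).2
    obtain ⟨k, hk⟩ := hβ.lift W hW (LinearMap.codRestrict _
      ((LinearMap.ker (f ∘ₗ α)).subtype ∘ₗ g - e ∘ₗ (LinearMap.ker (f ∘ₗ α)).subtype ∘ₗ g)
      (fun w => by simp [he', hg]))
    refine ⟨((LinearMap.ker (f ∘ₗ α)).subtype ∘ₗ g).prod k, ?_⟩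
    ext w
    have h1 : (β (k w) : X) = (g w : X) - e (g w) :=
      congrArg Subtype.val (LinearMap.congr_fun hk w)
    change e (g w : X) + (β (k w) : X) = (g w : X)
    rw [h1]; abel

include h𝒳 in
lemma memCC_ext [IsNoetherianRing R] [HenselianLocalRing R] {A B C : ModuleCat.{u} R}
    (i : A →ₗ[R] B) (p : B →ₗ[R] C) (hi : Function.Injective i) (hip : Function.Exact i p)
    (hp : Function.Surjective p) (hA : MemCC R 𝒳 A) (hC : MemCC R 𝒳 C) : MemCC R 𝒳 B := by
  obtain ⟨XA, _, _, α, hα, hαm, YA, _, _, β, hβ, hβm⟩ := memCC_min h𝒳 hA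
  obtain ⟨XC, _, _, γ, hγ, YC, _, _, δ, hδ⟩ := memCC_iff.mp hC
  obtain ⟨E, _, _, j, q, ε, hj, hjq, hq, hεj, hpε, hε⟩ :=
    ext_appr h𝒳 i p hi hip hp α hα hαm γ hγ
  have hεj' : ∀ x, ε (j x) = i (α x) := fun x => LinearMap.congr_fun hεj x
  have hpε' : ∀ x, p (ε x) = γ (q x) := fun x => LinearMap.congr_fun hpε x
  let i' : LinearMap.ker α →ₗ[R] LinearMap.ker ε := LinearMap.codRestrict _
    (j ∘ₗ (LinearMap.ker α).subtype) (fun x => by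
      have : α x = 0 := x.2
      simp [hεj', this])
  let p' : LinearMap.ker ε →ₗ[R] LinearMap.ker γ := LinearMap.codRestrict _
    (q ∘ₗ (LinearMap.ker ε).subtype) (fun x => by
      have : ε x = 0 := x.2
      simp [← hpε', this])
  have hi' : Function.Injective i' := fun x y h =>
    Subtype.ext (hj (congrArg Subtype.val h))
  have hip' : Function.Exact i' p' := by
    intro x
    constructor
    · intro hx
      obtain ⟨y, hy⟩ := (hjq x).mp (congrArg Subtype.val hx)
      have hy0 : α y = 0 := by
        apply hi
        rw [← hεj', hy, map_zero]
        exact x.2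
      exact ⟨⟨y, hy0⟩, Subtype.ext hy⟩
    · rintro ⟨y, rfl⟩
      exact Subtype.ext (hjq.apply_apply_eq_zero y.1)
  have hp' : Function.Surjective p' := by
    rintro ⟨z, hz⟩
    have hz : γ z = 0 := hz
    obtain ⟨e, rfl⟩ := hq z
    rw [← hpε'] at hz
    obtain ⟨a, ha⟩ := (hip _).mp hz
    obtain ⟨x, rfl⟩ := appr_surj h𝒳 hα a
    refine ⟨⟨e - j x, ?_⟩, Subtype.ext ?_⟩
    · rw [LinearMap.mem_ker, map_sub, hεj', ha, sub_self]
    · change q (e - j x) = q e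
      rw [map_sub, hjq.apply_apply_eq_zero, sub_zero]
  obtain ⟨E', _, _, _, _, ε', _, _, _, _, _, hε'⟩ :=
    ext_appr h𝒳 i' p' hi' hip' hp' β hβ hβm δ hδ
  exact memCC_iff.mpr ⟨E, _, _, ε, hε, E', _, _, ε', hε'⟩

end Helpers2

/-- Over a henselian Gorenstein local ring, the class `𝒞(𝒳)` is closed
under direct summands and under extensions. -/
theorem stmt11 (R : Type u) [CommRing R] [IsNoetherianRing R] [IsLocalRing R]
    [HenselianLocalRing R] (hG : IsGorensteinLocalRing R)
    (𝒳 : Set (ModuleCat.{u} R)) (h𝒳 : IsResolving R 𝒳) :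
    (∀ M N : ModuleCat.{u} R, Module.Finite R M → Module.Finite R N →
      MemCC R 𝒳 (ModuleCat.of R (↥M × ↥N)) → MemCC R 𝒳 M ∧ MemCC R 𝒳 N) ∧
    (∀ (A B C : ModuleCat.{u} R), Module.Finite R A → Module.Finite R B →
      Module.Finite R C → ∀ (f : ↥A →ₗ[R] ↥B) (g : ↥B →ₗ[R] ↥C),
      IsSES R f g → MemCC R 𝒳 A → MemCC R 𝒳 C → MemCC R 𝒳 B) := by
  refine ⟨fun M N _ _ h => ⟨?_, ?_⟩, fun A B C _ _ _ f g hfg hA hC => ?_⟩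
  · exact memCC_fst h𝒳 (M := ModuleCat.of R (↥M × ↥N)) (LinearMap.fst R M N)
      (LinearMap.inl R M N) (fun _ => rfl) h
  · exact memCC_fst h𝒳 (M := ModuleCat.of R (↥M × ↥N)) (LinearMap.snd R M N)
      (LinearMap.inr R M N) (fun _ => rfl) h
  · exact memCC_ext h𝒳 f g hfg.1 hfg.2.1 hfg.2.2 hA hC
end
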